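/- For every ε > 0 and every r ∈ (1,2) there are constants C > 0 and C' > 0 such that for every integer y ≥ 1 there is an integer N_{r,y} with: for all b with gcd(b,y) = 1, every real Q ≥ 1, and every finite set F ⊂ ℤ, one has ‖ sup | Lo_{N,y,Q} ∗ 1_F | ‖_{ℓ^r(ℤ)} ≤ C · Q^ε · |F|^{1/r}, where the supremum is over dyadic integers N = 2^n with N > N_{r,y} and Q < (log N)^{C' r'} (r' = r/(r−1)). -/

import Mathlib

open scoped ENNReal

noncomputable section

/-- `e(t) = e^{2πit}`. -/
def e2pi (t : ℝ) : ℂ := Complex.exp (2 * Real.pi * Complex.I * t)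

/-- For real `x > 0`, `M̂_x(θ) = (1/x) Σ_{0 ≤ n < x} e(-nθ)`. -/
def Mhat (x θ : ℝ) : ℂ :=
  ((1 / x : ℝ) : ℂ) * ∑ n ∈ Finset.range ⌈x⌉₊, e2pi (-(n * θ))

/-- The Gauss-type sum `Υ(a,q)`. -/
def Ups (y : ℕ) (b : ℤ) (a : ℤ) (q : ℕ) : ℂ :=
  ((Nat.totient y : ℂ) / (Nat.totient (Nat.lcm y q) : ℂ)) *
    ∑ r ∈ (Finset.Icc 1 q).filter
        (fun r : ℕ => Nat.gcd r q = 1 ∧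
          (r : ℤ) % (Nat.gcd y q : ℤ) = b % (Nat.gcd y q : ℤ)),
      e2pi (-((((r : ℤ) * a : ℤ) : ℝ) / (q : ℝ)))

/-- The Ramanujan height `h_y(q)` of `q` relative to `y`. -/
def hgt (y q : ℕ) : ℕ :=
  if 1 < Nat.gcd y q ∧ Nat.gcd y q < q ∧ 1 < Nat.gcd (Nat.gcd y q) (q / Nat.gcd y q) then 0
  else Nat.lcm y q / y

/-- The multiplier piece `L̂^{a,q}_{N,y}(ξ) = Υ(a,q) M̂_{N/ℓ}(ℓ(ξ-a/q)) χ(ℓ²(ξ-a/q))`. -/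
def Lhat (χ : ℝ → ℝ) (y : ℕ) (b : ℤ) (N : ℝ) (a q : ℕ) (ξ : ℝ) : ℂ :=
  Ups y b (a : ℤ) q *
    Mhat (N / (Nat.lcm y q : ℝ)) ((Nat.lcm y q : ℝ) * (ξ - (a : ℝ) / (q : ℝ))) *
    ((χ ((Nat.lcm y q : ℝ) ^ 2 * (ξ - (a : ℝ) / (q : ℝ))) : ℝ) : ℂ)

/-- The kernel `L^{a,q}_{N,y}(x) = ∫₀¹ L̂^{a,q}_{N,y}(ξ) e(xξ) dξ`. -/
def Lker (χ : ℝ → ℝ) (y : ℕ) (b : ℤ) (N : ℝ) (a q : ℕ) (x : ℤ) : ℂ :=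
  ∫ ξ in (0:ℝ)..1, Lhat χ y b N a q ξ * e2pi ((x : ℝ) * ξ)


/-- The Low kernel `Lo_{N,y,Q} = Σ_{q : h_y(q) < Q} Σ_{a ∈ A_q} L^{a,q}_{N,y}`
(a finite sum, since `h_y(q) < Q` forces `q ≤ yQ`). -/
def LoK (χ : ℝ → ℝ) (y : ℕ) (b : ℤ) (N : ℕ) (Q : ℝ) (x : ℤ) : ℂ :=
  ∑ q ∈ (Finset.Icc 1 (y * ⌈Q⌉₊)).filter (fun q : ℕ => (hgt y q : ℝ) < Q),
    ∑ a ∈ (Finset.Icc 1 q).filter (fun a : ℕ => Nat.gcd a q = 1),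
      Lker χ y b (N : ℝ) a q x

/-- `(Lo_{N,y,Q} ∗ 1_F)(x)`. -/
def LoConv (χ : ℝ → ℝ) (y : ℕ) (b : ℤ) (N : ℕ) (Q : ℝ) (F : Finset ℤ) (x : ℤ) : ℂ :=
  ∑ z ∈ F, LoK χ y b N Q (x - z)

open MeasureTheory

/-!
Group the fractions `a / q` by the height `d = lcm(y, q) / y`. For fixed `d` they are fractions of
denominator `y * d`, so they share one averaging multiplier and one bump, and their part of the low
operator is an average of step `y * d` convolved with `charSum y b d` times the Fourier coefficients
of the bump. The weight `Υ(a, q)` vanishes unless `d` is coprime to `y`, and then `charSum y b d` is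
computed by Ramanujan sums: it vanishes unless `d` is squarefree, and otherwise it is carried by
progressions of difference dividing `y * d`, so that the product has `ℓ¹` norm `O(τ(d) / φ(d))`.
Summing over `d < Q` costs only `Q ^ ε`, and each average is dominated by a one-sided
Hardy–Littlewood maximal function.

The frequency `a / q = 1` is an endpoint of the interval of integration, which therefore sees only
half of its bump. The half bump equals the bump composed with the projection to frequencies in
`[0, 1 / 2]`, whose kernel is half the identity plus a discrete Hilbert transform over odd shifts.
For indicator functions its weak-type bound comes from Boole's exact formula for the level sets of
`∑ (u - z)⁻¹`, and interpolating with the `ℓ²` bound gives `1 < r ≤ 2`.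
-/

section WeakType

variable {α β : Type*} [MeasurableSpace α] [MeasurableSpace β] {μ : Measure α} {ν : Measure β}

lemma lintegral_rpow_eq_lintegral_meas_ofReal_lt_mul {f : α → ℝ≥0∞} (hf : Measurable f)
    (hf_top : ∀ x, f x ≠ ∞) {p : ℝ} (hp : 0 < p) :
    ∫⁻ x, f x ^ p ∂μ = ENNReal.ofReal p *
      ∫⁻ t in Set.Ioi (0 : ℝ), μ {x | ENNReal.ofReal t < f x} * ENNReal.ofReal (t ^ (p - 1)) := by
  have h_rpow (x : α) : f x ^ p = ENNReal.ofReal ((f x).toReal ^ p) := by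
    rw [← ENNReal.ofReal_rpow_of_nonneg ENNReal.toReal_nonneg hp.le,
      ENNReal.ofReal_toReal (hf_top x)]
  simp_rw [h_rpow]
  rw [lintegral_rpow_eq_lintegral_meas_lt_mul μ (.of_forall fun _ => ENNReal.toReal_nonneg)
    hf.ennreal_toReal.aemeasurable hp]
  congr 1
  refine setLIntegral_congr_fun measurableSet_Ioi fun t (ht : 0 < t) => ?_
  simp only [ENNReal.ofReal_lt_iff_lt_toReal ht.le (hf_top _)]

lemma lintegral_rpow_le_of_mul_meas_lt_le_setLIntegral {f : α → ℝ≥0∞} {g : β → ℝ≥0∞}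
    (hf : Measurable f) (hg : Measurable g) (hf_top : ∀ x, f x ≠ ∞) (hg_top : ∀ x, g x ≠ ∞)
    (h : ∀ t, t * μ {x | 2 * t < f x} ≤ ∫⁻ x in {x | t < g x}, g x ∂ν) {r : ℝ} (hr : 1 < r) :
    ∫⁻ x, f x ^ r ∂μ ≤ ENNReal.ofReal (2 ^ r * r / (r - 1)) * ∫⁻ x, g x ^ r ∂ν := by
  have hr0 : 0 < r := by linarith
  have hr1 : 0 < r - 1 := by linarith
  have h_level (t : ℝ) (ht : 0 < t) :
      μ {x | ENNReal.ofReal t < f x / 2} * ENNReal.ofReal (t ^ (r - 1)) ≤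
        ν.withDensity g {x | ENNReal.ofReal t < g x} * ENNReal.ofReal (t ^ (r - 1 - 1)) := by
    have h_half (x : α) : ENNReal.ofReal t < f x / 2 ↔ 2 * ENNReal.ofReal t < f x := by
      rw [ENNReal.lt_div_iff_mul_lt (by simp) (by simp), mul_comm]
    have h_split : t ^ (r - 1) = t * t ^ (r - 1 - 1) := by
      rw [mul_comm, ← Real.rpow_add_one ht.ne', sub_add_cancel]
    rw [withDensity_apply _ (measurableSet_lt measurable_const hg), h_split,
      ENNReal.ofReal_mul ht.le, ← mul_assoc, mul_comm (μ _)]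
    simp only [h_half]
    exact mul_le_mul_left (h _) _
  calc ∫⁻ x, f x ^ r ∂μ
      = ENNReal.ofReal (2 ^ r) * ∫⁻ x, (f x / 2) ^ r ∂μ := by
        rw [← lintegral_const_mul _ ((hf.div_const 2).pow_const r)]
        refine lintegral_congr fun x => ?_
        rw [← ENNReal.ofReal_rpow_of_pos two_pos, ENNReal.ofReal_ofNat,
          ← ENNReal.mul_rpow_of_nonneg _ _ hr0.le, ENNReal.mul_div_cancel two_ne_zero (by simp)]
    _ ≤ ENNReal.ofReal (2 ^ r) * (ENNReal.ofReal r * ∫⁻ t in Set.Ioi (0 : ℝ),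
          ν.withDensity g {x | ENNReal.ofReal t < g x} * ENNReal.ofReal (t ^ (r - 1 - 1))) := by
        rw [lintegral_rpow_eq_lintegral_meas_ofReal_lt_mul (hf.div_const 2)
          (fun x => ENNReal.div_ne_top (hf_top x) two_ne_zero) hr0]
        gcongr _ * (_ * ?_)
        exact setLIntegral_mono' measurableSet_Ioi h_level
    _ = ENNReal.ofReal (2 ^ r * r / (r - 1)) * (ENNReal.ofReal (r - 1) *
          ∫⁻ t in Set.Ioi (0 : ℝ),
            ν.withDensity g {x | ENNReal.ofReal t < g x} * ENNReal.ofReal (t ^ (r - 1 - 1))) := by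
        rw [← mul_assoc, ← mul_assoc, ← ENNReal.ofReal_mul (by positivity),
          ← ENNReal.ofReal_mul (by positivity), div_mul_cancel₀ _ hr1.ne']
    _ = ENNReal.ofReal (2 ^ r * r / (r - 1)) * ∫⁻ x, g x ^ r ∂ν := by
        rw [← lintegral_rpow_eq_lintegral_meas_ofReal_lt_mul hg hg_top hr1,
          lintegral_withDensity_eq_lintegral_mul _ hg (hg.pow_const _)]
        congr 2 with x
        rw [Pi.mul_apply]
        nth_rw 1 [← ENNReal.rpow_one (g x)]
        rw [← ENNReal.rpow_add_of_nonneg _ _ zero_le_one hr1.le, add_sub_cancel]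

lemma lintegral_min_one_rpow_le_of_mul_meas_lt_le {f : α → ℝ≥0∞} (hf : Measurable f) {A : ℝ≥0∞}
    (h : ∀ t ≤ 1, t * μ {x | t < f x} ≤ A) {r : ℝ} (hr : 1 < r) :
    ∫⁻ x, min (f x) 1 ^ r ∂μ ≤ ENNReal.ofReal (r / (r - 1)) * A := by
  have hr0 : 0 < r := by linarith
  have hr1 : 0 < r - 1 := by linarith
  have h_level (t : ℝ) (ht : 0 < t) :
      μ {x | ENNReal.ofReal t < min (f x) 1} * ENNReal.ofReal (t ^ (r - 1)) ≤
        (Set.Ioc 0 1).indicator (fun t => A * ENNReal.ofReal (t ^ (r - 1 - 1))) t := by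
    rcases le_or_gt t 1 with ht1 | ht1
    · have h_split : t ^ (r - 1) = t * t ^ (r - 1 - 1) := by
        rw [mul_comm, ← Real.rpow_add_one ht.ne', sub_add_cancel]
      rw [Set.indicator_of_mem (Set.mem_Ioc.2 ⟨ht, ht1⟩), h_split, ENNReal.ofReal_mul ht.le,
        ← mul_assoc, mul_comm (μ _)]
      gcongr
      refine le_trans ?_ (h _ (ENNReal.ofReal_le_one.2 ht1))
      gcongr
      exact min_le_left _ _
    · have h_empty : {x | ENNReal.ofReal t < min (f x) 1} = ∅ :=
        Set.eq_empty_of_forall_notMem fun x hx =>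
          (ENNReal.one_lt_ofReal.2 ht1).not_gt (hx.trans_le (min_le_right _ _))
      rw [h_empty, measure_empty, zero_mul]
      exact zero_le
  rw [lintegral_rpow_eq_lintegral_meas_ofReal_lt_mul (hf.min measurable_const)
    (fun x => ne_top_of_le_ne_top ENNReal.one_ne_top (min_le_right _ _)) hr0]
  calc _ ≤ ENNReal.ofReal r * ∫⁻ t in Set.Ioi (0 : ℝ),
        (Set.Ioc 0 1).indicator (fun t => A * ENNReal.ofReal (t ^ (r - 1 - 1))) t := by
        gcongr _ * ?_
        exact setLIntegral_mono' measurableSet_Ioi h_level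
    _ = ENNReal.ofReal r * (A * ∫⁻ t in Set.Ioc (0 : ℝ) 1, ENNReal.ofReal (t ^ (r - 1 - 1))) := by
        rw [setLIntegral_indicator measurableSet_Ioc,
          Set.inter_eq_left.2 Set.Ioc_subset_Ioi_self, lintegral_const_mul _ (by fun_prop)]
    _ = ENNReal.ofReal r * (A * ENNReal.ofReal (1 / (r - 1))) := by
        rw [← ofReal_integral_eq_lintegral_ofReal
            (intervalIntegral.intervalIntegrable_rpow' (by linarith)).1
            ((ae_restrict_mem measurableSet_Ioc).mono fun t ht => Real.rpow_nonneg ht.1.le _),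
          ← intervalIntegral.integral_of_le zero_le_one, integral_rpow (Or.inl (by linarith))]
        simp [hr1.ne']
    _ = ENNReal.ofReal (r / (r - 1)) * A := by
        rw [mul_left_comm, ← ENNReal.ofReal_mul hr0.le, mul_one_div, mul_comm]

lemma lintegral_rpow_le_of_mul_meas_lt_le {f : α → ℝ≥0∞} (hf : Measurable f) {A : ℝ≥0∞}
    (h : ∀ t ≤ 1, t * μ {x | t < f x} ≤ A) {r : ℝ} (hr : 1 < r) (hr2 : r ≤ 2) :
    ∫⁻ x, f x ^ r ∂μ ≤ ENNReal.ofReal (r / (r - 1)) * A + ∫⁻ x, f x ^ (2 : ℝ) ∂μ := by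
  refine le_trans (lintegral_mono fun x => ?_) ((lintegral_add_right _ (hf.pow_const 2)).trans_le
    (add_le_add_left (lintegral_min_one_rpow_le_of_mul_meas_lt_le hf h hr) _))
  rcases le_total (f x) 1 with hx | hx
  · simp [hx]
  · exact (ENNReal.rpow_le_rpow_of_exponent_le hx hr2).trans le_add_self

lemma mul_count_le_of_forall_finset [DiscreteMeasurableSpace α] {s : Set α} {c A : ℝ≥0∞}
    (h : ∀ E : Finset α, (E : Set α) ⊆ s → c * (E.card : ℝ≥0∞) ≤ A) :
    c * Measure.count s ≤ A := by
  classical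
  rw [← lintegral_indicator_one (.of_discrete : MeasurableSet s), lintegral_count,
    ← ENNReal.tsum_mul_left]
  refine ENNReal.summable.tsum_le_of_sum_le fun E => ?_
  calc ∑ x ∈ E, c * s.indicator 1 x = c * ((E.filter (· ∈ s)).card : ℝ≥0∞) := by
        simp [Set.indicator_apply, ← Finset.sum_filter, mul_comm]
    _ ≤ A := h _ fun x hx => (Finset.mem_filter.1 hx).2

end WeakType

section OneSidedMaximalFunction

/-- The progression `x, x - l, …, x - (n - 1) l`. -/
def downProgression (l n : ℕ) (x : ℤ) : Finset ℤ :=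
  (Finset.range n).image fun i : ℕ => x - l * i

/-- The one-sided maximal average of `g` along the progressions of step `l`. -/
def avgMax (l : ℕ) (g : ℤ → ℝ≥0∞) (x : ℤ) : ℝ≥0∞ :=
  ⨆ n : ℕ, (∑ i ∈ Finset.range (n + 1), g (x - l * i)) / ((n + 1 : ℕ) : ℝ≥0∞)

variable {l : ℕ} {g : ℤ → ℝ≥0∞} {x : ℤ} {t : ℝ≥0∞}

lemma mem_downProgression {n : ℕ} {u : ℤ} :
    u ∈ downProgression l n x ↔ ∃ i < n, x - (l : ℤ) * i = u := by
  simp [downProgression]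

lemma injective_sub_mul_natCast (hl : 0 < l) (x : ℤ) :
    Function.Injective fun i : ℕ => x - (l : ℤ) * i := by
  intro i j h
  simpa [hl.ne'] using h

lemma card_downProgression (hl : 0 < l) (n : ℕ) (x : ℤ) : (downProgression l n x).card = n := by
  rw [downProgression, Finset.card_image_of_injective _ (injective_sub_mul_natCast hl x),
    Finset.card_range]

lemma sum_downProgression (hl : 0 < l) (n : ℕ) :
    ∑ u ∈ downProgression l n x, g u = ∑ i ∈ Finset.range n, g (x - l * i) :=
  Finset.sum_image (injective_sub_mul_natCast hl x).injOn

lemma disjoint_downProgression (hl : 0 < l) {y : ℤ} {m n : ℕ} (hyx : y ≤ x)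
    (hy : y ∉ downProgression l m x) :
    Disjoint (downProgression l m x) (downProgression l n y) := by
  refine Finset.disjoint_left.2 fun u hux huy => hy ?_
  obtain ⟨i, hi, rfl⟩ := mem_downProgression.1 hux
  obtain ⟨j, -, hj⟩ := mem_downProgression.1 huy
  have hji : j ≤ i := by
    have : (l : ℤ) * j ≤ l * i := by linarith
    exact_mod_cast le_of_mul_le_mul_left this (by exact_mod_cast hl)
  exact mem_downProgression.2 ⟨i - j, by omega, by push_cast [hji]; linarith⟩

-- Select greedily from the right: a point left of `x` outside the progression of `x` has a
-- progression disjoint from it.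
lemma exists_pairwiseDisjoint_downProgression (hl : 0 < l) (n : ℤ → ℕ) (hn : ∀ x, 0 < n x)
    (E : Finset ℤ) :
    ∃ A ⊆ E, (A : Set ℤ).PairwiseDisjoint (fun x => downProgression l (n x) x) ∧
      E ⊆ A.biUnion fun x => downProgression l (n x) x := by
  induction E using Finset.strongInduction with
  | H E ih =>
    rcases E.eq_empty_or_nonempty with rfl | hE
    · exact ⟨∅, by simp⟩
    set x := E.max' hE
    set I := downProgression l (n x) x
    have hxI : x ∈ I := mem_downProgression.2 ⟨0, hn x, by simp⟩
    have h_ssubset : E \ I ⊂ E := by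
      refine Finset.ssubset_iff_subset_ne.2 ⟨Finset.sdiff_subset, fun h => ?_⟩
      have hxE : x ∈ E \ I := by rw [h]; exact E.max'_mem hE
      exact (Finset.mem_sdiff.1 hxE).2 hxI
    obtain ⟨A, hAE, hA_disj, hA_cover⟩ := ih _ h_ssubset
    refine ⟨insert x A, ?_, ?_, fun u hu => ?_⟩
    · exact Finset.insert_subset (E.max'_mem hE) (hAE.trans Finset.sdiff_subset)
    · rw [Finset.coe_insert]
      refine hA_disj.insert fun y hy _ => ?_
      obtain ⟨hyE, hyI⟩ := Finset.mem_sdiff.1 (hAE hy)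
      exact disjoint_downProgression hl (E.le_max' y hyE) hyI
    · rw [Finset.biUnion_insert, Finset.mem_union]
      exact or_iff_not_imp_left.2 fun huI => hA_cover (Finset.mem_sdiff.2 ⟨hu, huI⟩)

lemma lt_avgMax_iff :
    t < avgMax l g x ↔
      ∃ n : ℕ, t * ((n + 1 : ℕ) : ℝ≥0∞) < ∑ i ∈ Finset.range (n + 1), g (x - l * i) := by
  simp only [avgMax, lt_iSup_iff]
  refine exists_congr fun n => ?_
  rw [ENNReal.lt_div_iff_mul_lt] <;> simp

lemma avgMax_add_le (l : ℕ) (g h : ℤ → ℝ≥0∞) (x : ℤ) :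
    avgMax l (g + h) x ≤ avgMax l g x + avgMax l h x := by
  refine iSup_le fun n => ?_
  simp only [Pi.add_apply, Finset.sum_add_distrib, ENNReal.add_div]
  exact add_le_add
    (le_iSup (fun n : ℕ => (∑ i ∈ Finset.range (n + 1), g (x - l * i)) / ((n + 1 : ℕ) : ℝ≥0∞)) n)
    (le_iSup (fun n : ℕ => (∑ i ∈ Finset.range (n + 1), h (x - l * i)) / ((n + 1 : ℕ) : ℝ≥0∞)) n)

lemma avgMax_le_of_forall_le (h : ∀ u, g u ≤ t) (x : ℤ) : avgMax l g x ≤ t := by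
  refine iSup_le fun n => ENNReal.div_le_of_le_mul ?_
  calc ∑ i ∈ Finset.range (n + 1), g (x - l * i) ≤ ∑ _ ∈ Finset.range (n + 1), t :=
        Finset.sum_le_sum fun i _ => h _
    _ = t * ((n + 1 : ℕ) : ℝ≥0∞) := by simp [mul_comm]

lemma mul_card_le_tsum_of_lt_avgMax (hl : 0 < l) {E : Finset ℤ}
    (hE : ∀ x ∈ E, t < avgMax l g x) : t * (E.card : ℝ≥0∞) ≤ ∑' u, g u := by
  have h_exists (x : ℤ) : ∃ n : ℕ, x ∈ E →
      t * ((n + 1 : ℕ) : ℝ≥0∞) ≤ ∑ i ∈ Finset.range (n + 1), g (x - l * i) := by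
    by_cases hx : x ∈ E
    · exact (lt_avgMax_iff.1 (hE x hx)).imp fun n hn _ => hn.le
    · exact ⟨0, fun h => absurd h hx⟩
  choose n hn using h_exists
  obtain ⟨A, hAE, hA_disj, hA_cover⟩ :=
    exists_pairwiseDisjoint_downProgression hl (fun x => n x + 1) (fun x => Nat.succ_pos _) E
  calc t * (E.card : ℝ≥0∞)
      ≤ t * ∑ x ∈ A, ((n x + 1 : ℕ) : ℝ≥0∞) := by
        gcongr
        rw [← Nat.cast_sum]
        refine Nat.cast_le.2 ((Finset.card_le_card hA_cover).trans
          (Finset.card_biUnion_le.trans ?_))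
        simp only [card_downProgression hl, le_refl]
    _ ≤ ∑ x ∈ A, ∑ u ∈ downProgression l (n x + 1) x, g u := by
        rw [Finset.mul_sum]
        refine Finset.sum_le_sum fun x hx => ?_
        rw [sum_downProgression hl]
        exact hn x (hAE hx)
    _ = ∑ u ∈ A.biUnion fun x => downProgression l (n x + 1) x, g u :=
        (Finset.sum_biUnion hA_disj).symm
    _ ≤ ∑' u, g u := ENNReal.sum_le_tsum _

lemma mul_count_lt_avgMax_le (hl : 0 < l) (g : ℤ → ℝ≥0∞) (t : ℝ≥0∞) :
    t * Measure.count {x | t < avgMax l g x} ≤ ∑' u, g u :=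
  mul_count_le_of_forall_finset fun _ hE => mul_card_le_tsum_of_lt_avgMax hl hE

lemma mul_count_two_mul_lt_avgMax_le (hl : 0 < l) (g : ℤ → ℝ≥0∞) (t : ℝ≥0∞) :
    t * Measure.count {x | 2 * t < avgMax l g x} ≤
      ∫⁻ u in {u | t < g u}, g u ∂Measure.count := by
  rw [← lintegral_indicator .of_discrete, lintegral_count]
  refine le_trans ?_ (mul_count_lt_avgMax_le hl _ t)
  gcongr t * Measure.count ?_
  intro x (hx : 2 * t < avgMax l g x)
  have h_compl : avgMax l ({u | t < g u}ᶜ.indicator g) x ≤ t :=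
    avgMax_le_of_forall_le
      (fun u => Set.indicator_apply_le' (fun hu => not_lt.1 hu) fun _ => zero_le) x
  have h_split := avgMax_add_le l ({u | t < g u}.indicator g) ({u | t < g u}ᶜ.indicator g) x
  rw [Set.indicator_self_add_compl] at h_split
  refine lt_of_not_ge fun (h_le : _ ≤ t) => hx.not_ge ?_
  rw [two_mul]
  exact h_split.trans (add_le_add h_le h_compl)

theorem tsum_avgMax_rpow_le (hl : 0 < l) {r : ℝ} (hr : 1 < r) (g : ℤ → ℝ≥0∞) :
    ∑' x, avgMax l g x ^ r ≤ ENNReal.ofReal (2 ^ r * r / (r - 1)) * ∑' x, g x ^ r := by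
  have hr0 : 0 < r := by linarith
  have : 0 < r - 1 := by linarith
  by_cases hfin : ∑' x, g x ^ r = ∞
  · rw [hfin, ENNReal.mul_top (ENNReal.ofReal_pos.2 (by positivity)).ne']
    exact le_top
  have hg_le (u : ℤ) : g u ≤ (∑' x, g x ^ r) ^ (1 / r) := by
    rw [one_div, ENNReal.le_rpow_inv_iff hr0]
    exact ENNReal.le_tsum u
  have h_top : (∑' x, g x ^ r) ^ (1 / r) ≠ ∞ := ENNReal.rpow_ne_top_of_nonneg (by positivity) hfin
  simpa only [lintegral_count] using lintegral_rpow_le_of_mul_meas_lt_le_setLIntegral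
    (μ := Measure.count) (ν := Measure.count)
    (measurable_of_countable _) (measurable_of_countable _)
    (fun x => ne_top_of_le_ne_top h_top (avgMax_le_of_forall_le hg_le x))
    (fun u => ne_top_of_le_ne_top h_top (hg_le u)) (mul_count_two_mul_lt_avgMax_le hl g) hr

end OneSidedMaximalFunction

section PoleSum

open Polynomial Topology

/-- The sum of simple poles of residue `1` at the points of `F`; it is the Hilbert transform of the
counting measure on `F`. -/
def poleSum (F : Finset ℝ) (u : ℝ) : ℝ := ∑ z ∈ F, (u - z)⁻¹

/-- `s` is the solution of `poleSum F s = t` between the pole `z` and the next pole to its right. -/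
def IsRightRoot (F : Finset ℝ) (t z s : ℝ) : Prop :=
  z < s ∧ (∀ w ∈ F, z < w → s < w) ∧ poleSum F s = t

variable {F : Finset ℝ} {t z : ℝ}

lemma continuousOn_poleSum (F : Finset ℝ) : ContinuousOn (poleSum F) (F : Set ℝ)ᶜ :=
  continuousOn_finsetSum _ fun w hw => ContinuousOn.inv₀ (by fun_prop) fun u hu =>
    sub_ne_zero.2 fun h : u = w => hu (h ▸ hw)

lemma exists_tendsto_poleSum_erase (F : Finset ℝ) (z : ℝ) :
    ∃ c, Filter.Tendsto (poleSum (F.erase z)) (𝓝 z) (𝓝 c) := by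
  have h_nhds : ((F.erase z : Finset ℝ) : Set ℝ)ᶜ ∈ 𝓝 z :=
    (F.erase z).finite_toSet.isClosed.isOpen_compl.mem_nhds (by simp)
  exact ⟨_, (continuousOn_poleSum _).continuousAt h_nhds⟩

lemma poleSum_eq_inv_add_erase (hz : z ∈ F) (u : ℝ) :
    poleSum F u = (u - z)⁻¹ + poleSum (F.erase z) u :=
  (Finset.add_sum_erase F (fun w => (u - w)⁻¹) hz).symm

lemma tendsto_poleSum_nhdsGT (hz : z ∈ F) : Filter.Tendsto (poleSum F) (𝓝[>] z) Filter.atTop := by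
  obtain ⟨c, hc⟩ := exists_tendsto_poleSum_erase F z
  have h_sub : Filter.Tendsto (fun u => u - z) (𝓝[>] z) (𝓝[>] 0) := by
    rw [← sub_self z]
    exact tendsto_nhdsWithin_iff.2 ⟨(Filter.tendsto_id.sub_const z).mono_left nhdsWithin_le_nhds,
      eventually_mem_nhdsWithin.mono fun u (hu : z < u) => by simpa using hu⟩
  exact ((tendsto_inv_nhdsGT_zero.comp h_sub).atTop_add (hc.mono_left nhdsWithin_le_nhds)).congr
    fun u => (poleSum_eq_inv_add_erase hz u).symm

lemma tendsto_poleSum_nhdsLT (hz : z ∈ F) : Filter.Tendsto (poleSum F) (𝓝[<] z) Filter.atBot := by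
  obtain ⟨c, hc⟩ := exists_tendsto_poleSum_erase F z
  have h_sub : Filter.Tendsto (fun u => u - z) (𝓝[<] z) (𝓝[<] 0) := by
    rw [← sub_self z]
    exact tendsto_nhdsWithin_iff.2 ⟨(Filter.tendsto_id.sub_const z).mono_left nhdsWithin_le_nhds,
      eventually_mem_nhdsWithin.mono fun u (hu : u < z) => by simpa using hu⟩
  exact ((tendsto_inv_nhdsLT_zero.comp h_sub).atBot_add (hc.mono_left nhdsWithin_le_nhds)).congr
    fun u => (poleSum_eq_inv_add_erase hz u).symm

lemma tendsto_poleSum_atTop (F : Finset ℝ) : Filter.Tendsto (poleSum F) Filter.atTop (𝓝 0) := by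
  rw [← Finset.sum_const_zero (s := F)]
  exact tendsto_finsetSum _ fun w _ =>
    tendsto_inv_atTop_zero.comp (Filter.tendsto_atTop_add_const_right _ (-w) Filter.tendsto_id)

lemma exists_isRightRoot (ht : 0 < t) (hz : z ∈ F) : ∃ s, IsRightRoot F t z s := by
  classical
  have h_cont {I : Set ℝ} (hI : ∀ u ∈ I, z < u ∧ ∀ w ∈ F, z < w → u < w) :
      ContinuousOn (poleSum F) I :=
    (continuousOn_poleSum F).mono fun u hu huF => ((hI u hu).2 u huF (hI u hu).1).false
  rcases (F.filter (z < ·)).eq_empty_or_nonempty with h_last | h_next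
  · have hI (u : ℝ) (hu : u ∈ Set.Ioi z) : z < u ∧ ∀ w ∈ F, z < w → u < w :=
      ⟨hu, fun w hw hzw => absurd hzw (Finset.filter_eq_empty_iff.1 h_last hw)⟩
    obtain ⟨s, hs, hst⟩ := isPreconnected_Ioi.intermediate_value_Ioi
      (Filter.le_principal_iff.2 (Filter.Ioi_mem_atTop z))
      (Filter.le_principal_iff.2 self_mem_nhdsWithin) (h_cont hI)
      (tendsto_poleSum_atTop F) (tendsto_poleSum_nhdsGT hz) ht
    exact ⟨s, (hI s hs).1, (hI s hs).2, hst⟩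
  · set m := (F.filter (z < ·)).min' h_next
    obtain ⟨hmF, hzm⟩ := Finset.mem_filter.1 ((F.filter (z < ·)).min'_mem h_next)
    have hI (u : ℝ) (hu : u ∈ Set.Ioo z m) : z < u ∧ ∀ w ∈ F, z < w → u < w :=
      ⟨hu.1, fun w hw hzw =>
        hu.2.trans_le (Finset.min'_le _ _ (Finset.mem_filter.2 ⟨hw, hzw⟩))⟩
    obtain ⟨s, hs, hst⟩ := isPreconnected_Ioo.intermediate_value_Iii
      (Filter.le_principal_iff.2 (Ioo_mem_nhdsLT hzm))
      (Filter.le_principal_iff.2 (Ioo_mem_nhdsGT hzm)) (h_cont hI)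
      (tendsto_poleSum_nhdsLT hmF) (tendsto_poleSum_nhdsGT hz) (Set.mem_univ t)
    exact ⟨s, (hI s hs).1, (hI s hs).2, hst⟩

lemma eval_derivative_nodal {u : ℝ} (hu : u ∉ F) :
    eval u (derivative (Lagrange.nodal F id)) = poleSum F u * eval u (Lagrange.nodal F id) := by
  rw [Lagrange.derivative_nodal, eval_finsetSum, poleSum, Finset.sum_mul]
  refine Finset.sum_congr rfl fun w hw => ?_
  have huw : u - w ≠ 0 := sub_ne_zero.2 fun h => hu (h ▸ hw)
  rw [Lagrange.nodal_eq_mul_nodal_erase hw, eval_mul, eval_sub, eval_X, eval_C, id,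
    inv_mul_cancel_left₀ huw]

variable {s : ℝ → ℝ}

lemma IsRightRoot.notMem {s : ℝ} (hs : IsRightRoot F t z s) : s ∉ F :=
  fun h => (hs.2.1 s h hs.1).false

lemma injOn_of_isRightRoot (hs : ∀ z ∈ F, IsRightRoot F t z (s z)) : Set.InjOn s F := by
  intro z hz w hw h
  by_contra hne
  rcases lt_or_gt_of_ne hne with hlt | hlt
  · exact (((hs z hz).2.1 w hw hlt).trans (hs w hw).1).ne h
  · exact (((hs w hw).2.1 z hz hlt).trans (hs z hz).1).ne' h

lemma nodal_isRightRoot (ht : t ≠ 0) (hs : ∀ z ∈ F, IsRightRoot F t z (s z)) :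
    C t * Lagrange.nodal F s = C t * Lagrange.nodal F id - derivative (Lagrange.nodal F id) := by
  have h_monic (v : ℝ → ℝ) : (Lagrange.nodal F v).Monic := Lagrange.nodal_monic
  refine eq_of_degree_sub_lt_of_eval_index_eq _ (injOn_of_isRightRoot hs) ?_ fun z hz => ?_
  · rw [sub_sub_eq_add_sub, add_sub_right_comm, ← mul_sub]
    refine (degree_add_le _ _).trans_lt (max_lt ?_ ?_)
    · rw [degree_C_mul ht, ← Lagrange.degree_nodal (v := s)]
      exact degree_sub_lt_left (by simp only [Lagrange.degree_nodal]) (h_monic s).ne_zero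
        (by rw [(h_monic s).leadingCoeff, (h_monic id).leadingCoeff])
    · rw [← Lagrange.degree_nodal (v := id)]
      exact degree_derivative_lt (h_monic id).ne_zero
  · rw [eval_sub, eval_derivative_nodal (hs z hz).notMem, (hs z hz).2.2, eval_mul, eval_mul,
      eval_C, sub_self, Lagrange.eval_nodal_at_node hz, mul_zero]

-- Boole's identity: compare the subleading coefficients in `nodal_isRightRoot`.
lemma sum_sub_eq_card_div (ht : t ≠ 0) (hs : ∀ z ∈ F, IsRightRoot F t z (s z)) :
    ∑ z ∈ F, (s z - z) = F.card / t := by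
  rcases F.eq_empty_or_nonempty with rfl | hF
  · simp
  have h_card : F.card - 1 + 1 = F.card := Nat.sub_add_cancel hF.card_pos
  have h_lead : (Lagrange.nodal F (id : ℝ → ℝ)).coeff F.card = 1 := by
    rw [← Lagrange.natDegree_nodal (v := id)]
    exact Lagrange.nodal_monic
  have h_coeff := congrArg (coeff · (F.card - 1)) (nodal_isRightRoot ht hs)
  simp only [coeff_sub, coeff_C_mul, coeff_derivative, h_card, h_lead] at h_coeff
  rw [Lagrange.nodal, Lagrange.nodal, prod_X_sub_C_coeff_card_pred _ _ hF.card_pos,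
    prod_X_sub_C_coeff_card_pred _ _ hF.card_pos, ← Nat.cast_add_one, h_card] at h_coeff
  rw [Finset.sum_sub_distrib, eq_div_iff ht]
  simp only [id] at h_coeff
  linarith

lemma poleSum_lt_poleSum (hF : F.Nonempty) {u v : ℝ} (huv : u < v)
    (h : ∀ w ∈ F, w < u ∨ v < w) : poleSum F v < poleSum F u := by
  refine Finset.sum_lt_sum_of_nonempty hF fun w hw => ?_
  rcases h w hw with hwu | hvw
  · exact inv_strictAnti₀ (sub_pos.2 hwu) (by linarith)
  · exact (inv_lt_inv_of_neg (sub_neg.2 hvw) (by linarith)).2 (by linarith)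

lemma exists_mem_Ioc_of_le_poleSum (ht : 0 < t) (hs : ∀ z ∈ F, IsRightRoot F t z (s z)) {u : ℝ}
    (huF : u ∉ F) (hu : t ≤ poleSum F u) : ∃ z ∈ F, u ∈ Set.Ioc z (s z) := by
  classical
  have h_left : (F.filter (· < u)).Nonempty := by
    rw [Finset.filter_nonempty_iff]
    by_contra! h
    exact (ht.trans_le hu).not_ge
      (Finset.sum_nonpos fun w hw => inv_nonpos.2 (by linarith [h w hw]))
  set z := (F.filter (· < u)).max' h_left
  obtain ⟨hzF, hzu⟩ := Finset.mem_filter.1 ((F.filter (· < u)).max'_mem h_left)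
  refine ⟨z, hzF, hzu, not_lt.1 fun hsu => ?_⟩
  refine hu.not_gt ((poleSum_lt_poleSum ⟨z, hzF⟩ hsu fun w hw => ?_).trans_eq (hs z hzF).2.2)
  rcases lt_or_gt_of_ne (ne_of_mem_of_not_mem hw huF) with hwu | huw
  · exact .inl ((Finset.le_max' _ _ (Finset.mem_filter.2 ⟨hw, hwu⟩)).trans_lt (hs z hzF).1)
  · exact .inr huw

lemma mul_card_le_of_le_poleSum {F : Finset ℤ} (ht : 0 < t) {E : Finset ℤ} (hEF : Disjoint E F)
    (hE : ∀ x ∈ E, t ≤ poleSum (F.image (↑)) x) : t * E.card ≤ F.card := by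
  classical
  choose! s hs using fun z (hz : z ∈ F.image ((↑) : ℤ → ℝ)) => exists_isRightRoot ht hz
  have h_cover : E ⊆ F.biUnion fun z : ℤ => Finset.Ioc z ⌊s z⌋ := by
    intro x hx
    have hxF : (x : ℝ) ∉ F.image ((↑) : ℤ → ℝ) := by
      simpa using Finset.disjoint_left.1 hEF hx
    obtain ⟨z, hz, hzx, hxs⟩ := exists_mem_Ioc_of_le_poleSum ht hs hxF (hE x hx)
    obtain ⟨z, hzF, rfl⟩ := Finset.mem_image.1 hz
    exact Finset.mem_biUnion.2
      ⟨z, hzF, Finset.mem_Ioc.2 ⟨by exact_mod_cast hzx, Int.le_floor.2 hxs⟩⟩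
  have h_card (z : ℤ) (hz : z ∈ F) : ((Finset.Ioc z ⌊s z⌋).card : ℝ) ≤ s z - z := by
    have h_le : z ≤ ⌊s z⌋ := Int.le_floor.2 (hs z (Finset.mem_image_of_mem _ hz)).1.le
    have h_eq : ((Finset.Ioc z ⌊s z⌋).card : ℤ) = ⌊s z⌋ - z := by
      rw [Int.card_Ioc, Int.toNat_of_nonneg (sub_nonneg.2 h_le)]
    rw [← Int.cast_natCast, h_eq, Int.cast_sub]
    linarith [Int.floor_le (s z)]
  have h_boole := sum_sub_eq_card_div ht.ne' hs
  rw [Finset.sum_image Int.cast_injective.injOn,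
    Finset.card_image_of_injective _ Int.cast_injective] at h_boole
  rw [← le_div_iff₀' ht, ← h_boole]
  calc (E.card : ℝ) ≤ ∑ z ∈ F, ((Finset.Ioc z ⌊s z⌋).card : ℝ) := by
        exact_mod_cast (Finset.card_le_card h_cover).trans Finset.card_biUnion_le
    _ ≤ ∑ z ∈ F, (s z - z) := Finset.sum_le_sum h_card

lemma poleSum_image_neg (F : Finset ℝ) (u : ℝ) :
    poleSum (F.image Neg.neg) (-u) = -poleSum F u := by
  rw [poleSum, poleSum, Finset.sum_image neg_injective.injOn, ← Finset.sum_neg_distrib]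
  refine Finset.sum_congr rfl fun w _ => ?_
  rw [← inv_neg, neg_sub_neg, neg_sub]

lemma mul_card_le_of_le_abs_poleSum {F : Finset ℤ} (ht : 0 < t) {E : Finset ℤ}
    (hEF : Disjoint E F) (hE : ∀ x ∈ E, t ≤ |poleSum (F.image (↑)) x|) :
    t * E.card ≤ 2 * F.card := by
  classical
  set E₁ := E.filter fun x : ℤ => t ≤ poleSum (F.image (↑)) x
  set E₂ := E.filter fun x : ℤ => t ≤ -poleSum (F.image (↑)) x
  have h_pos : t * E₁.card ≤ F.card :=
    mul_card_le_of_le_poleSum ht (hEF.mono_left (Finset.filter_subset _ _))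
      fun x hx => (Finset.mem_filter.1 hx).2
  have h_neg : t * (E₂.image Neg.neg).card ≤ (F.image Neg.neg).card := by
    refine mul_card_le_of_le_poleSum ht ((Finset.disjoint_image neg_injective).2
      (hEF.mono_left (Finset.filter_subset _ _))) (Finset.forall_mem_image.2 fun x hx => ?_)
    have h_image : (F.image Neg.neg).image ((↑) : ℤ → ℝ) =
        (F.image ((↑) : ℤ → ℝ)).image Neg.neg := by
      simp only [Finset.image_image, Function.comp_def, Int.cast_neg]
    rw [h_image, Int.cast_neg, poleSum_image_neg]
    exact (Finset.mem_filter.1 hx).2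
  rw [Finset.card_image_of_injective _ neg_injective,
    Finset.card_image_of_injective _ neg_injective] at h_neg
  have h_card : (E.card : ℝ) ≤ E₁.card + E₂.card := by
    have h_cover : E ⊆ E₁ ∪ E₂ := fun x hx => by
      simpa [E₁, E₂, hx] using le_abs.1 (hE x hx)
    exact_mod_cast (Finset.card_le_card h_cover).trans (Finset.card_union_le _ _)
  nlinarith

end PoleSum

section Exponential

lemma e2pi_add (s t : ℝ) : e2pi (s + t) = e2pi s * e2pi t := by
  rw [e2pi, e2pi, e2pi, ← Complex.exp_add]
  push_cast
  ring_nf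

@[simp] lemma e2pi_zero : e2pi 0 = 1 := by simp [e2pi]

lemma e2pi_eq_one_iff {t : ℝ} : e2pi t = 1 ↔ ∃ n : ℤ, t = n := by
  rw [e2pi, Complex.exp_eq_one_iff]
  refine exists_congr fun n => ?_
  rw [mul_comm, mul_left_inj' Complex.two_pi_I_ne_zero]
  norm_cast

@[simp] lemma e2pi_intCast (n : ℤ) : e2pi n = 1 := e2pi_eq_one_iff.2 ⟨n, rfl⟩

lemma e2pi_add_intCast (t : ℝ) (n : ℤ) : e2pi (t + n) = e2pi t := by
  rw [e2pi_add, e2pi_intCast, mul_one]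

lemma e2pi_congr {s t : ℝ} (n : ℤ) (h : s = t + n) : e2pi s = e2pi t :=
  h ▸ e2pi_add_intCast t n

lemma e2pi_half : e2pi (1 / 2) = -1 := by
  rw [e2pi, ← Complex.exp_pi_mul_I]
  push_cast
  ring_nf

@[simp] lemma norm_e2pi (t : ℝ) : ‖e2pi t‖ = 1 := by
  rw [e2pi, ← Complex.norm_exp_ofReal_mul_I (2 * Real.pi * t)]
  push_cast
  ring_nf

lemma conj_e2pi (t : ℝ) : (starRingEnd ℂ) (e2pi t) = e2pi (-t) := by
  simp [e2pi, ← Complex.exp_conj, Complex.conj_ofNat]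

lemma fourier_eq_e2pi {T : ℝ} (n : ℤ) (t : ℝ) :
    fourier n (t : AddCircle T) = e2pi (n * t / T) := by
  rw [fourier_coe_apply, e2pi]
  push_cast
  ring_nf

lemma hasDerivAt_e2pi_mul (c t : ℝ) :
    HasDerivAt (fun t => e2pi (c * t)) (2 * Real.pi * Complex.I * c * e2pi (c * t)) t := by
  simp only [e2pi, Complex.ofReal_mul]
  have h_lin : HasDerivAt (fun t : ℝ => 2 * Real.pi * Complex.I * (c * t))
      (2 * Real.pi * Complex.I * (c * 1)) t :=
    (Complex.ofRealCLM.hasDerivAt.const_mul _).const_mul _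
  convert h_lin.cexp using 1
  ring

@[fun_prop] lemma continuous_e2pi : Continuous e2pi := by unfold e2pi; fun_prop

lemma integral_e2pi_mul {c : ℝ} (hc : c ≠ 0) (a b : ℝ) :
    ∫ ξ in a..b, e2pi (c * ξ) = (e2pi (c * b) - e2pi (c * a)) / (2 * Real.pi * Complex.I * c) := by
  have h_ne : (2 * Real.pi * Complex.I * c : ℂ) ≠ 0 :=
    mul_ne_zero Complex.two_pi_I_ne_zero (Complex.ofReal_ne_zero.2 hc)
  rw [eq_div_iff h_ne, mul_comm, ← intervalIntegral.integral_const_mul]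
  exact intervalIntegral.integral_eq_sub_of_hasDerivAt (fun t _ => hasDerivAt_e2pi_mul c t)
    (Continuous.intervalIntegrable (by fun_prop) _ _)

lemma integral_e2pi_intCast_mul (m : ℤ) :
    ∫ ξ in (0 : ℝ)..1, e2pi (m * ξ) = if m = 0 then 1 else 0 := by
  split_ifs with h
  · simp [h]
  · rw [integral_e2pi_mul (Int.cast_ne_zero.2 h), mul_one, mul_zero, e2pi_intCast, e2pi_zero,
      sub_self, zero_div]

end Exponential

section HalfProjection

/-- The convolution kernel of the projection to frequencies in `[0, 1/2]`. -/
def halfKer (x : ℤ) : ℂ := ∫ ξ in (0 : ℝ)..(1 / 2), e2pi (x * ξ)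

/-- The projection of `1_F` to frequencies in `[0, 1/2]`. -/
def halfProj (F : Finset ℤ) (x : ℤ) : ℂ := ∑ z ∈ F, halfKer (x - z)

variable {F : Finset ℤ} {x : ℤ}

lemma halfKer_of_even (hx : Even x) (h0 : x ≠ 0) : halfKer x = 0 := by
  obtain ⟨k, rfl⟩ := hx
  have h_mul : ((k + k : ℤ) : ℝ) * (1 / 2) = k := by push_cast; ring
  rw [halfKer, integral_e2pi_mul (Int.cast_ne_zero.2 h0), h_mul, e2pi_intCast, mul_zero, e2pi_zero,
    sub_self, zero_div]

lemma halfKer_of_odd (hx : Odd x) : halfKer x = Complex.I / Real.pi * (x : ℂ)⁻¹ := by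
  have h0 : x ≠ 0 := fun h => by simp [h] at hx
  have h_half : e2pi (x * (1 / 2)) = -1 := by
    obtain ⟨k, rfl⟩ := hx
    rw [← e2pi_half]
    exact e2pi_congr k (by push_cast; ring)
  have h_pi : (Real.pi : ℂ) ≠ 0 := Complex.ofReal_ne_zero.2 Real.pi_ne_zero
  have h_x : (x : ℂ) ≠ 0 := Int.cast_ne_zero.2 h0
  rw [halfKer, integral_e2pi_mul (Int.cast_ne_zero.2 h0), h_half, mul_zero, e2pi_zero,
    Complex.ofReal_intCast]
  field_simp
  rw [Complex.I_sq]
  ring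

lemma norm_halfProj_of_notMem (hx : x ∉ F) :
    ‖halfProj F x‖ = Real.pi⁻¹ * |poleSum ((F.filter fun z => Odd (x - z)).image (↑)) x| := by
  have h_eq : halfProj F x = Complex.I / Real.pi *
      (poleSum ((F.filter fun z => Odd (x - z)).image (↑)) x : ℝ) := by
    rw [halfProj, poleSum, Finset.sum_image Int.cast_injective.injOn, Complex.ofReal_sum,
      Finset.mul_sum, Finset.sum_filter]
    refine Finset.sum_congr rfl fun z hz => ?_
    split_ifs with hodd
    · rw [halfKer_of_odd hodd]
      push_cast
      rfl
    · exact halfKer_of_even (Int.not_odd_iff_even.1 hodd) (sub_ne_zero.2 fun h => hx (h ▸ hz))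
  rw [h_eq, norm_mul, norm_div, Complex.norm_I, Complex.norm_real, Complex.norm_real,
    Real.norm_of_nonneg Real.pi_pos.le, one_div, Real.norm_eq_abs]

-- Within one parity class of `x` the poles `z` with `x - z` odd do not depend on `x`.
lemma mul_card_le_of_le_norm_halfProj_of_even_sub {t : ℝ} (ht : 0 < t) {E : Finset ℤ}
    (hEF : Disjoint E F) (h_even : ∀ x ∈ E, ∀ y ∈ E, Even (x - y))
    (hE : ∀ x ∈ E, t ≤ ‖halfProj F x‖) : t * E.card ≤ 2 * F.card := by
  rcases E.eq_empty_or_nonempty with rfl | ⟨y, hy⟩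
  · simp
  calc t * E.card ≤ 2 * (F.filter fun z => Odd (y - z)).card := by
        refine mul_card_le_of_le_abs_poleSum ht (hEF.mono_right (Finset.filter_subset _ _))
          fun x hx => ?_
        have h_filter : (F.filter fun z => Odd (y - z)) = F.filter fun z => Odd (x - z) := by
          refine Finset.filter_congr fun z _ => ?_
          have := h_even x hx y hy
          grind
        rw [h_filter]
        refine (hE x hx).trans ?_
        rw [norm_halfProj_of_notMem (Finset.disjoint_left.1 hEF hx)]
        exact mul_le_of_le_one_left (abs_nonneg _)
          (inv_le_one_of_one_le₀ (by linarith [Real.pi_gt_three]))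
    _ ≤ 2 * F.card := by gcongr; exact Finset.filter_subset _ _

lemma mul_card_le_of_le_norm_halfProj {t : ℝ} (ht : 0 < t) (ht1 : t ≤ 1) {E : Finset ℤ}
    (hE : ∀ x ∈ E, t ≤ ‖halfProj F x‖) : t * E.card ≤ 5 * F.card := by
  classical
  have h_parity (P : ℤ → Prop) [DecidablePred P] (hP : ∀ x y, P x → P y → Even (x - y)) :
      t * ((E \ F).filter P).card ≤ 2 * F.card := by
    have h_mem {x : ℤ} (hx : x ∈ (E \ F).filter P) : x ∈ E ∧ x ∉ F ∧ P x := by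
      simpa [and_assoc] using hx
    exact mul_card_le_of_le_norm_halfProj_of_even_sub ht
      (Finset.disjoint_left.2 fun x hx => (h_mem hx).2.1)
      (fun x hx y hy => hP x y (h_mem hx).2.2 (h_mem hy).2.2) fun x hx => hE x (h_mem hx).1
  have h_even := h_parity Even fun x y hx hy => hx.sub hy
  have h_odd := h_parity (¬ Even ·) fun x y hx hy => by grind
  have h_inter : t * (E ∩ F).card ≤ F.card := by
    refine (mul_le_of_le_one_left (by positivity) ht1).trans ?_
    exact_mod_cast Finset.card_le_card Finset.inter_subset_right
  have h_card : (E.card : ℝ) = ((E \ F).filter Even).card +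
      ((E \ F).filter (¬ Even ·)).card + (E ∩ F).card := by
    rw [← Finset.card_sdiff_add_card_inter E F,
      ← Finset.card_filter_add_card_filter_not (s := E \ F) Even]
    push_cast
    rfl
  rw [h_card]
  linarith

lemma integral_norm_sq_sum_e2pi (F : Finset ℤ) :
    ∫ ξ in (0 : ℝ)..1, ‖∑ z ∈ F, e2pi (-(z * ξ))‖ ^ 2 = F.card := by
  have h_expand (ξ : ℝ) : ((‖∑ z ∈ F, e2pi (-(z * ξ))‖ ^ 2 : ℝ) : ℂ) =
      ∑ z ∈ F, ∑ w ∈ F, e2pi ((w - z : ℤ) * ξ) := by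
    rw [← Complex.normSq_eq_norm_sq, ← Complex.mul_conj, map_sum, Finset.sum_mul_sum]
    refine Finset.sum_congr rfl fun z _ => Finset.sum_congr rfl fun w _ => ?_
    rw [conj_e2pi, ← e2pi_add]
    push_cast
    ring_nf
  have h_int (m : ℤ) : IntervalIntegrable (fun ξ : ℝ => e2pi (m * ξ)) volume 0 1 :=
    Continuous.intervalIntegrable (by fun_prop) _ _
  rw [← Complex.ofReal_inj, ← intervalIntegral.integral_ofReal]
  simp_rw [h_expand]
  rw [intervalIntegral.integral_finsetSum fun z _ =>
    Continuous.intervalIntegrable (by fun_prop) _ _]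
  simp_rw [intervalIntegral.integral_finsetSum fun _ _ => h_int _, integral_e2pi_intCast_mul,
    sub_eq_zero]
  simp

lemma fourierCoeffOn_indicator_sum_e2pi (F : Finset ℤ) (x : ℤ) :
    fourierCoeffOn zero_lt_one
      ((Set.Iic (1 / 2 : ℝ)).indicator fun ξ => ∑ z ∈ F, e2pi (-(z * ξ))) (-x) = halfProj F x := by
  have h_integrand (ξ : ℝ) : fourier (- -x) (ξ : AddCircle ((1 : ℝ) - 0)) •
      (Set.Iic (1 / 2 : ℝ)).indicator (fun ξ => ∑ z ∈ F, e2pi (-(z * ξ))) ξ =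
      {ξ | ξ ≤ (1 / 2 : ℝ)}.indicator (fun ξ => ∑ z ∈ F, e2pi ((x - z : ℤ) * ξ)) ξ := by
    simp only [Set.indicator_apply, Set.mem_Iic, Set.mem_ofPred_eq]
    split_ifs
    · rw [fourier_coe_apply, smul_eq_mul, Finset.mul_sum]
      refine Finset.sum_congr rfl fun z _ => ?_
      rw [e2pi, e2pi, ← Complex.exp_add]
      push_cast
      ring_nf
    · exact smul_zero _
  rw [fourierCoeffOn_eq_integral]
  simp_rw [h_integrand]
  rw [intervalIntegral.integral_indicator (by norm_num), halfProj,
    intervalIntegral.integral_finsetSum fun z _ => Continuous.intervalIntegrable (by fun_prop) _ _]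
  simp [halfKer]

lemma tsum_enorm_halfProj_sq_le (F : Finset ℤ) : ∑' x, ‖halfProj F x‖ₑ ^ 2 ≤ F.card := by
  set f : ℝ → ℂ := fun ξ => ∑ z ∈ F, e2pi (-(z * ξ))
  have hf : Continuous f := by fun_prop
  have h_memLp : MemLp ((Set.Iic (1 / 2)).indicator f) 2 (volume.restrict (Set.Ioc 0 1)) := by
    refine (MemLp.of_bound hf.aestronglyMeasurable F.card
      (Filter.Eventually.of_forall fun ξ => ?_)).indicator measurableSet_Iic
    exact (norm_sum_le _ _).trans (by simp)
  have h_parseval := hasSum_sq_fourierCoeffOn zero_lt_one h_memLp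
  rw [← (Equiv.neg ℤ).hasSum_iff] at h_parseval
  simp only [Function.comp_def, Equiv.neg_apply, f, fourierCoeffOn_indicator_sum_e2pi, sub_zero,
    inv_one, one_smul] at h_parseval
  have h_le : ∫ ξ in (0 : ℝ)..1, ‖(Set.Iic (1 / 2)).indicator f ξ‖ ^ 2 ≤ F.card := by
    rw [← integral_norm_sq_sum_e2pi F, intervalIntegral.integral_of_le zero_le_one,
      intervalIntegral.integral_of_le zero_le_one]
    refine integral_mono_of_nonneg (Filter.Eventually.of_forall fun _ => by positivity)
      ((Continuous.integrableOn_Icc (by fun_prop)).mono_set Set.Ioc_subset_Icc_self)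
      (Filter.Eventually.of_forall fun ξ => ?_)
    exact pow_le_pow_left₀ (norm_nonneg _) (norm_indicator_le_norm_self f ξ) 2
  calc ∑' x, ‖halfProj F x‖ₑ ^ 2 = ∑' x, ENNReal.ofReal (‖halfProj F x‖ ^ 2) := by
        simp_rw [ENNReal.ofReal_pow (norm_nonneg _), ofReal_norm]
    _ = ENNReal.ofReal (∑' x, ‖halfProj F x‖ ^ 2) :=
        (ENNReal.ofReal_tsum_of_nonneg (fun _ => by positivity) h_parseval.summable).symm
    _ ≤ ENNReal.ofReal F.card := ENNReal.ofReal_le_ofReal (h_parseval.tsum_eq.trans_le h_le)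
    _ = F.card := ENNReal.ofReal_natCast _

lemma mul_count_lt_enorm_halfProj_le (F : Finset ℤ) {t : ℝ≥0∞} (ht1 : t ≤ 1) :
    t * Measure.count {x | t < ‖halfProj F x‖ₑ} ≤ 5 * F.card := by
  rcases eq_or_ne t 0 with rfl | h0
  · simp
  have h_top : t ≠ ∞ := ne_top_of_le_ne_top ENNReal.one_ne_top ht1
  refine mul_count_le_of_forall_finset fun E hE => ?_
  have h_real : t.toReal * E.card ≤ 5 * F.card := by
    refine mul_card_le_of_le_norm_halfProj (ENNReal.toReal_pos h0 h_top)
      (ENNReal.toReal_le_of_le_ofReal zero_le_one (by simpa using ht1)) fun x hx => ?_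
    exact ENNReal.toReal_le_of_le_ofReal (norm_nonneg _)
      ((ofReal_norm (halfProj F x)).symm ▸ (hE hx).le)
  rw [← ENNReal.toReal_le_toReal (by finiteness) (by finiteness)]
  simpa using h_real

lemma tsum_enorm_halfProj_rpow_le {r : ℝ} (hr : 1 < r) (hr2 : r ≤ 2) (F : Finset ℤ) :
    ∑' x, ‖halfProj F x‖ₑ ^ r ≤ ENNReal.ofReal (5 * r / (r - 1) + 1) * F.card := by
  have : 0 < r - 1 := sub_pos.2 hr
  have : 0 < r := one_pos.trans hr
  have h := lintegral_rpow_le_of_mul_meas_lt_le (μ := Measure.count)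
    (measurable_of_countable fun x => ‖halfProj F x‖ₑ)
    (fun t ht => mul_count_lt_enorm_halfProj_le F ht) hr hr2
  rw [lintegral_count, lintegral_count] at h
  simp_rw [ENNReal.rpow_two] at h
  calc ∑' x, ‖halfProj F x‖ₑ ^ r
      ≤ ENNReal.ofReal (r / (r - 1)) * (5 * F.card) + F.card :=
        h.trans (add_le_add_right (tsum_enorm_halfProj_sq_le F) _)
    _ = ENNReal.ofReal (5 * r / (r - 1) + 1) * F.card := by
        rw [ENNReal.ofReal_add (by positivity) zero_le_one, ENNReal.ofReal_one, mul_div_assoc,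
          ENNReal.ofReal_mul (by norm_num), ENNReal.ofReal_ofNat]
        ring

end HalfProjection

section PeriodicSums

variable {M : Type*} [AddCommMonoid M]

lemma sum_Icc_natCast_eq_sum_Ioc (n : ℕ) (f : ℤ → M) :
    ∑ r ∈ Finset.Icc 1 n, f r = ∑ r ∈ Finset.Ioc (0 : ℤ) n, f r := by
  refine Finset.sum_nbij' (fun r => (r : ℤ)) Int.toNat ?_ ?_ ?_ ?_ ?_ <;> intro r hr <;>
    simp only [Finset.mem_Icc, Finset.mem_Ioc] at hr ⊢ <;> omega

lemma sum_Icc_filter_gcd_eq_sum_Ioc (n d : ℕ) (f : ℤ → M) :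
    ∑ r ∈ Finset.Icc 1 n with Nat.gcd r d = 1, f r =
      ∑ r ∈ Finset.Ioc (0 : ℤ) n with Int.gcd r d = 1, f r := by
  simp only [Finset.sum_filter, ← sum_Icc_natCast_eq_sum_Ioc, Int.gcd_natCast_natCast]

lemma sum_Ioc_filter_dvd {g : ℕ} (hg : 0 < g) (d : ℕ) (f : ℤ → M) :
    ∑ r ∈ Finset.Ioc (0 : ℤ) (g * d) with (g : ℤ) ∣ r, f r =
      ∑ s ∈ Finset.Ioc (0 : ℤ) d, f (g * s) := by
  have hg' : (g : ℚ) ≠ 0 := Nat.cast_ne_zero.2 hg.ne'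
  rw [Int.Ioc_filter_dvd_eq _ _ (Int.natCast_pos.2 hg), Finset.sum_map]
  simp [mul_div_cancel_left₀ _ hg', mul_comm]

lemma sum_Ico_add_eq_of_periodic {q : ℕ} {f : ℤ → M} (hf : Function.Periodic f q) (v : ℤ) :
    ∑ r ∈ Finset.Ico v (v + q), f r = ∑ r ∈ Finset.Ico (0 : ℤ) q, f r := by
  have h_image := Int.image_Ico_emod v q (Int.natCast_nonneg q)
  have h_inj : Set.InjOn (· % (q : ℤ)) (Finset.Ico v (v + q)) := by
    rw [← Finset.card_image_iff, h_image]
    simp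
  rw [← h_image, Finset.sum_image h_inj]
  refine Finset.sum_congr rfl fun r _ => ?_
  rw [Int.emod_def, mul_comm, ← smul_eq_mul, hf.sub_zsmul_eq]

lemma sum_Ioc_add_of_periodic {q : ℕ} {f : ℤ → M} (hf : Function.Periodic f q) (v : ℤ) :
    ∑ r ∈ Finset.Ioc (0 : ℤ) q, f (v + r) = ∑ r ∈ Finset.Ioc (0 : ℤ) q, f r := by
  have h_window (w : ℤ) : ∑ r ∈ Finset.Ioc w (w + q), f r = ∑ r ∈ Finset.Ico (0 : ℤ) q, f r := by
    rw [← sum_Ico_add_eq_of_periodic hf (w + 1), add_right_comm,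
      Finset.Ico_add_one_add_one_eq_Ioc]
  have h_shift := Finset.sum_map (Finset.Ioc (0 : ℤ) q) (addLeftEmbedding v) f
  rw [Finset.map_add_left_Ioc, add_zero, h_window v] at h_shift
  simpa using h_shift.symm.trans (h_window 0).symm

lemma sum_Ioc_filter_modEq {g : ℕ} (hg : 0 < g) (d : ℕ) {f : ℤ → M}
    (hf : Function.Periodic f (g * d)) (b : ℤ) :
    ∑ r ∈ Finset.Ioc (0 : ℤ) (g * d) with r ≡ b [ZMOD g], f r =
      ∑ s ∈ Finset.Ioc (0 : ℤ) d, f (b + g * s) := by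
  have h_periodic : Function.Periodic (fun r => if r ≡ b [ZMOD g] then f r else 0)
      ((g * d : ℕ) : ℤ) := by
    intro r
    have h_modEq : r + g * d ≡ b [ZMOD g] ↔ r ≡ b [ZMOD g] := by simp [Int.ModEq]
    simp only [Nat.cast_mul, h_modEq, hf r]
  have h_dvd (r : ℤ) : b + r ≡ b [ZMOD g] ↔ (g : ℤ) ∣ r := by
    rw [Int.modEq_comm, Int.modEq_iff_dvd, add_sub_cancel_left]
  have h_sum := sum_Ioc_add_of_periodic h_periodic b
  simp only [h_dvd, Nat.cast_mul] at h_sum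
  rw [Finset.sum_filter, ← h_sum, ← Finset.sum_filter, sum_Ioc_filter_dvd hg]

lemma sum_Ioc_eq_zero_of_periodic {q : ℕ} {f : ℤ → ℂ} (hf : Function.Periodic f q) {c : ℂ}
    (hc : c ≠ 1) (v : ℤ) (hv : ∀ r, f (v + r) = c * f r) : ∑ r ∈ Finset.Ioc (0 : ℤ) q, f r = 0 := by
  have h_sum := sum_Ioc_add_of_periodic hf v
  simp only [hv] at h_sum
  rw [← Finset.mul_sum] at h_sum
  exact (mul_left_eq_self₀.1 h_sum).resolve_left hc

lemma e2pi_intCast_div_eq_one_iff {n : ℕ} (hn : 0 < n) {m : ℤ} :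
    e2pi (m / n) = 1 ↔ (n : ℤ) ∣ m := by
  have hn' : (n : ℝ) ≠ 0 := Nat.cast_ne_zero.2 hn.ne'
  rw [e2pi_eq_one_iff]
  refine exists_congr fun k => ?_
  rw [div_eq_iff hn', mul_comm]
  norm_cast

lemma periodic_e2pi_mul_div (m : ℤ) (n : ℕ) :
    Function.Periodic (fun c : ℤ => e2pi (m * (c / n))) n := by
  intro c
  rcases eq_or_ne n 0 with rfl | hn
  · simp
  refine e2pi_congr m ?_
  have : (n : ℝ) ≠ 0 := Nat.cast_ne_zero.2 hn
  push_cast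
  field_simp

lemma sum_Ioc_e2pi_mul_div (m : ℤ) (n : ℕ) :
    ∑ c ∈ Finset.Ioc (0 : ℤ) n, e2pi (m * (c / n)) = if (n : ℤ) ∣ m then (n : ℂ) else 0 := by
  rcases n.eq_zero_or_pos with rfl | hn
  · simp
  have hn' : (n : ℝ) ≠ 0 := Nat.cast_ne_zero.2 hn.ne'
  split_ifs with h
  · obtain ⟨k, rfl⟩ := h
    have h_one (c : ℤ) : e2pi (((n * k : ℤ) : ℝ) * (c / n)) = 1 :=
      e2pi_eq_one_iff.2 ⟨k * c, by push_cast; field_simp⟩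
    simp only [h_one, Finset.sum_const]
    simp
  · refine sum_Ioc_eq_zero_of_periodic (periodic_e2pi_mul_div m n)
      (mt (e2pi_intCast_div_eq_one_iff hn).1 h) 1 fun c => ?_
    rw [← e2pi_add]
    push_cast
    ring_nf

end PeriodicSums

section RamanujanSums

open scoped ArithmeticFunction.Moebius

lemma sum_divisors_filter_dvd_moebius {d : ℕ} (hd : 0 < d) (c : ℤ) :
    ∑ e ∈ d.divisors with ((e : ℕ) : ℤ) ∣ c, (μ e : ℂ) = if Int.gcd c d = 1 then 1 else 0 := by
  have h_divisors : (d.divisors.filter fun e : ℕ => (e : ℤ) ∣ c) = (Int.gcd c d).divisors := by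
    ext e
    have h_gcd : Int.gcd c d ≠ 0 := fun h => hd.ne' (by simpa using (Int.gcd_eq_zero_iff.1 h).2)
    rw [Finset.mem_filter, Nat.mem_divisors, Nat.mem_divisors, and_iff_left hd.ne',
      and_iff_left h_gcd, and_comm, Int.dvd_gcd_iff, Int.natCast_dvd_natCast]
  rw [h_divisors, ← ArithmeticFunction.one_apply, ← ArithmeticFunction.coe_moebius_mul_coe_zeta,
    ArithmeticFunction.coe_mul_zeta_apply]
  rfl

lemma sum_Ioc_coprime_e2pi_mul_div {n d : ℕ} (hn : 0 < n) (hdn : d ∣ n) (m : ℤ) :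
    ∑ c ∈ Finset.Ioc (0 : ℤ) n with Int.gcd c d = 1, e2pi (m * (c / n)) =
      ∑ e ∈ d.divisors, μ e * if ((n / e : ℕ) : ℤ) ∣ m then ((n / e : ℕ) : ℂ) else 0 := by
  have hd : 0 < d := Nat.pos_of_dvd_of_pos hdn hn
  have h_multiples (e : ℕ) (he : e ∈ d.divisors) :
      ∑ c ∈ Finset.Ioc (0 : ℤ) n with (e : ℤ) ∣ c, e2pi (m * (c / n)) =
        if ((n / e : ℕ) : ℤ) ∣ m then ((n / e : ℕ) : ℂ) else 0 := by
    obtain ⟨k, rfl⟩ := (Nat.dvd_of_mem_divisors he).trans hdn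
    have he0 : 0 < e := Nat.pos_of_mem_divisors he
    have he' : (e : ℝ) ≠ 0 := Nat.cast_ne_zero.2 he0.ne'
    rw [Nat.mul_div_cancel_left _ he0, ← sum_Ioc_e2pi_mul_div, Nat.cast_mul,
      sum_Ioc_filter_dvd he0]
    refine Finset.sum_congr rfl fun c _ => ?_
    push_cast
    rw [mul_div_mul_left _ _ he']
  calc ∑ c ∈ Finset.Ioc (0 : ℤ) n with Int.gcd c d = 1, e2pi (m * (c / n))
      = ∑ c ∈ Finset.Ioc (0 : ℤ) n, ∑ e ∈ d.divisors,
          if (e : ℤ) ∣ c then μ e * e2pi (m * (c / n)) else 0 := by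
        rw [Finset.sum_filter]
        refine Finset.sum_congr rfl fun c _ => ?_
        rw [← Finset.sum_filter, ← Finset.sum_mul, sum_divisors_filter_dvd_moebius hd, ite_mul,
          one_mul, zero_mul]
    _ = ∑ e ∈ d.divisors, μ e * ∑ c ∈ Finset.Ioc (0 : ℤ) n with (e : ℤ) ∣ c,
          e2pi (m * (c / n)) := by
        rw [Finset.sum_comm]
        simp_rw [← Finset.sum_filter, Finset.mul_sum]
    _ = _ := Finset.sum_congr rfl fun e he => by rw [h_multiples e he]

lemma sum_Ioc_coprime_e2pi_mul_div_of_isCoprime {d : ℕ} (hd : 0 < d) {m : ℤ}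
    (hm : IsCoprime m d) :
    ∑ c ∈ Finset.Ioc (0 : ℤ) d with Int.gcd c d = 1, e2pi (m * (c / d)) = μ d := by
  rw [sum_Ioc_coprime_e2pi_mul_div hd dvd_rfl, Finset.sum_eq_single d]
  · simp [Nat.div_self hd]
  · intro e he hed
    have h_dvd := Nat.dvd_of_mem_divisors he
    rw [if_neg, mul_zero]
    intro h
    have h_unit : IsUnit ((d / e : ℕ) : ℤ) :=
      hm.isUnit_of_dvd' h (Int.natCast_dvd_natCast.2 (Nat.div_dvd_of_dvd h_dvd))
    exact hed (Nat.eq_of_dvd_of_div_eq_one h_dvd (Int.ofNat_isUnit.1 h_unit |> Nat.isUnit_iff.1))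
  · exact fun h => absurd (Nat.mem_divisors_self d hd.ne') h

end RamanujanSums

section LowMultiplierArithmetic

lemma gcd_mul_eq_of_dvd_of_coprime {y g d : ℕ} (hgy : g ∣ y) (hyd : y.Coprime d) :
    y.gcd (g * d) = g := by
  rw [Nat.Coprime.gcd_mul_right_cancel_right _ hyd.symm, Nat.gcd_eq_right hgy]

lemma lcm_mul_eq_of_dvd_of_coprime {y g d : ℕ} (hgy : g ∣ y) (hyd : y.Coprime d) :
    y.lcm (g * d) = y * d :=
  Nat.dvd_antisymm (Nat.lcm_dvd (dvd_mul_right y d) (mul_dvd_mul_right hgy d))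
    (hyd.mul_dvd_of_dvd_of_dvd (Nat.dvd_lcm_left _ _)
      ((dvd_mul_left d g).trans (Nat.dvd_lcm_right _ _)))

/-- The summand of the Gauss-type sum `Υ(a,q)` at a residue `m`, extended to all integers as a
`q`-periodic function. -/
def upsTerm (a : ℤ) (q : ℕ) (m : ℤ) : ℂ :=
  if Int.gcd m q = 1 then e2pi (-(m * (a / q))) else 0

lemma periodic_upsTerm (a : ℤ) (q : ℕ) : Function.Periodic (upsTerm a q) q := by
  intro m
  rcases eq_or_ne q 0 with rfl | hq
  · simp
  have hq' : (q : ℝ) ≠ 0 := Nat.cast_ne_zero.2 hq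
  have h_phase : e2pi (-((m + q : ℤ) * (a / q))) = e2pi (-(m * (a / q))) := by
    refine e2pi_congr (-a) ?_
    push_cast
    field_simp
    ring
  rw [upsTerm, upsTerm, Int.gcd_add_self_left, h_phase]

lemma Ups_eq_sum_upsTerm {y g d : ℕ} (hg : 0 < g) (hgy : y.gcd (g * d) = g) {b b' : ℤ}
    (hb : b ≡ b' [ZMOD g]) (a : ℤ) :
    Ups y b a (g * d) = (Nat.totient y / Nat.totient (y.lcm (g * d))) *
      ∑ s ∈ Finset.Ioc (0 : ℤ) d, upsTerm a (g * d) (b' + g * s) := by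
  have h_periodic : Function.Periodic (upsTerm a (g * d)) (g * d) := by
    exact_mod_cast periodic_upsTerm a (g * d)
  rw [Ups, hgy, ← sum_Ioc_filter_modEq hg d h_periodic, Finset.sum_filter, Finset.sum_filter,
    ← Nat.cast_mul, ← sum_Icc_natCast_eq_sum_Ioc]
  congr 1
  refine Finset.sum_congr rfl fun r _ => ?_
  have h_modEq : (r : ℤ) ≡ b' [ZMOD g] ↔ (r : ℤ) % g = b % g := by rw [hb.eq]; rfl
  simp only [upsTerm, Int.gcd_natCast_natCast, ← ite_and, h_modEq, and_comm, Int.cast_mul,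
    mul_div_assoc]

lemma upsTerm_add_mul_of_dvd {p g h : ℕ} (hp : p ≠ 0) (hg : g ≠ 0) (hh : h ≠ 0) (hpg : p ∣ g)
    (a m : ℤ) :
    upsTerm a (g * (p * h)) (m + g * h) =
      e2pi ((-a : ℤ) / p) * upsTerm a (g * (p * h)) m := by
  have h_coprime (n : ℤ) : Int.gcd n (g * (p * h) : ℕ) = 1 ↔ IsCoprime n (g * h) := by
    rw [← Int.isCoprime_iff_gcd_eq_one]
    push_cast
    rw [IsCoprime.mul_right_iff, IsCoprime.mul_right_iff, IsCoprime.mul_right_iff]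
    exact ⟨fun ⟨hng, _, hnh⟩ => ⟨hng, hnh⟩, fun ⟨hng, hnh⟩ =>
      ⟨hng, hng.of_isCoprime_of_dvd_right (Int.natCast_dvd_natCast.2 hpg), hnh⟩⟩
  have h_shift : IsCoprime (m + g * h) (g * h : ℤ) ↔ IsCoprime m (g * h) := by
    simpa using IsCoprime.add_mul_left_left_iff (x := m) (y := (g * h : ℤ)) (z := 1)
  simp only [upsTerm, h_coprime, h_shift, mul_ite, mul_zero, ← e2pi_add]
  congr 2
  push_cast
  field_simp
  ring

lemma Ups_eq_zero {y g d : ℕ} (hg : 0 < g) (hd : 0 < d) (hgy : y.gcd (g * d) = g)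
    (hgd : ¬ g.Coprime d) (b : ℤ) {a : ℤ} (ha : IsCoprime a (g * d)) : Ups y b a (g * d) = 0 := by
  obtain ⟨p, hp, hp_dvd⟩ := Nat.exists_prime_and_dvd hgd
  have hpg : p ∣ g := hp_dvd.trans (Nat.gcd_dvd_left _ _)
  obtain ⟨h, rfl⟩ : p ∣ d := hp_dvd.trans (Nat.gcd_dvd_right _ _)
  have hh : h ≠ 0 := (Nat.pos_of_mul_pos_left hd).ne'
  have h_periodic : Function.Periodic (fun s => upsTerm a (g * (p * h)) (b + g * s))
      ((p * h : ℕ) : ℤ) := fun s => by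
    have := periodic_upsTerm a (g * (p * h)) (b + g * s)
    rwa [Nat.cast_mul g, add_assoc, ← mul_add] at this
  have h_phase : e2pi ((-a : ℤ) / p) ≠ 1 := by
    rw [Ne, e2pi_intCast_div_eq_one_iff hp.pos, dvd_neg]
    intro hpa
    have h_unit : IsUnit (p : ℤ) :=
      ha.isUnit_of_dvd' hpa ((Int.natCast_dvd_natCast.2 hpg).mul_right _)
    exact hp.not_isUnit (Int.ofNat_isUnit.1 h_unit)
  rw [Ups_eq_sum_upsTerm hg hgy (Int.ModEq.refl b),
    sum_Ioc_eq_zero_of_periodic h_periodic h_phase h, mul_zero]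
  intro s
  rw [← upsTerm_add_mul_of_dvd hp.ne_zero hg.ne' hh hpg]
  ring_nf

lemma upsTerm_add_mul_of_coprime {g d : ℕ} (hg : 0 < g) (hd : 0 < d) (hgd : g.Coprime d)
    {b : ℤ} (hbg : IsCoprime b g) (hbd : (d : ℤ) ∣ b) (a s : ℤ) :
    upsTerm a (g * d) (b + g * s) = e2pi (-(b * (a / (g * d : ℕ)))) *
      if Int.gcd s d = 1 then e2pi ((-a : ℤ) * (s / d)) else 0 := by
  have h_coprime : Int.gcd (b + g * s) (g * d : ℕ) = 1 ↔ Int.gcd s d = 1 := by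
    rw [← Int.isCoprime_iff_gcd_eq_one, ← Int.isCoprime_iff_gcd_eq_one, Nat.cast_mul,
      IsCoprime.mul_right_iff, IsCoprime.add_mul_left_left_iff]
    obtain ⟨k, rfl⟩ := hbd
    rw [IsCoprime.mul_add_left_left_iff, and_iff_right hbg, IsCoprime.mul_left_iff,
      and_iff_right (Nat.isCoprime_iff_coprime.2 hgd)]
  have hg' : (g : ℝ) ≠ 0 := Nat.cast_ne_zero.2 hg.ne'
  have hd' : (d : ℝ) ≠ 0 := Nat.cast_ne_zero.2 hd.ne'
  simp only [upsTerm, h_coprime, mul_ite, mul_zero, ← e2pi_add]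
  congr 2
  push_cast
  field_simp
  ring

open scoped ArithmeticFunction.Moebius

lemma Ups_eq_moebius {y g d : ℕ} (hy : 0 < y) (hd : 0 < d) (hgy : g ∣ y) (hyd : y.Coprime d)
    {b b' : ℤ} (hb : IsCoprime b y) (hbb' : b ≡ b' [ZMOD g]) (hdb' : (d : ℤ) ∣ b') {a : ℤ}
    (ha : IsCoprime a (g * d)) :
    Ups y b a (g * d) = μ d / Nat.totient d * e2pi (-(b' * (a / (g * d : ℕ)))) := by
  have hg : 0 < g := Nat.pos_of_dvd_of_pos hgy hy
  have hb'g : IsCoprime b' g := by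
    obtain ⟨k, hk⟩ := hbb'.dvd
    obtain rfl : b' = b + g * k := by linear_combination hk
    exact IsCoprime.add_mul_left_left_iff.2
      (hb.of_isCoprime_of_dvd_right (Int.natCast_dvd_natCast.2 hgy))
  have hφy : (Nat.totient y : ℂ) ≠ 0 := Nat.cast_ne_zero.2 (Nat.totient_pos.2 hy).ne'
  rw [Ups_eq_sum_upsTerm hg (gcd_mul_eq_of_dvd_of_coprime hgy hyd) hbb',
    lcm_mul_eq_of_dvd_of_coprime hgy hyd, Nat.totient_mul hyd, Nat.cast_mul,
    div_mul_cancel_left₀ hφy]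
  simp only [upsTerm_add_mul_of_coprime hg hd (hyd.coprime_dvd_left hgy) hb'g hdb']
  rw [← Finset.mul_sum, ← Finset.sum_filter,
    sum_Ioc_coprime_e2pi_mul_div_of_isCoprime hd ha.of_mul_right_right.neg_left]
  ring

-- Sort the fractions `c / (y * d)` by `gcd c y = y / g`.
lemma sum_divisors_coprime_fractions {M : Type*} [AddCommMonoid M] {y d : ℕ} (hy : 0 < y)
    (hyd : y.Coprime d) (f : ℝ → M) :
    ∑ g ∈ y.divisors, ∑ a ∈ Finset.Ioc (0 : ℤ) (g * d : ℕ) with Int.gcd a (g * d : ℕ) = 1,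
        f (a / (g * d : ℕ)) =
      ∑ c ∈ Finset.Ioc (0 : ℤ) (y * d : ℕ) with Int.gcd c d = 1, f (c / (y * d : ℕ)) := by
  have h_maps (c : ℤ) (_ : c ∈ (Finset.Ioc (0 : ℤ) (y * d : ℕ)).filter (Int.gcd · d = 1)) :
      Int.gcd c y ∈ y.divisors :=
    Nat.mem_divisors.2 ⟨Int.natCast_dvd_natCast.1 (Int.gcd_dvd_right c y), hy.ne'⟩
  rw [← Finset.sum_fiberwise_of_maps_to h_maps, ← Nat.sum_div_divisors]
  refine Finset.sum_congr rfl fun k hk => ?_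
  obtain ⟨g, rfl⟩ := Nat.dvd_of_mem_divisors hk
  have hk0 : 0 < k := Nat.pos_of_mem_divisors hk
  have hk' : (k : ℝ) ≠ 0 := Nat.cast_ne_zero.2 hk0.ne'
  have h_gcd (a : ℤ) : Int.gcd (k * a) d = 1 ∧ Int.gcd (k * a) (k * g : ℕ) = k ↔
      Int.gcd a (g * d : ℕ) = 1 := by
    have hkd : IsCoprime (k : ℤ) d := Nat.isCoprime_iff_coprime.2 hyd.coprime_mul_right
    rw [Nat.cast_mul, Int.gcd_mul_left, Int.natAbs_natCast, mul_eq_left₀ hk0.ne',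
      ← Int.isCoprime_iff_gcd_eq_one, ← Int.isCoprime_iff_gcd_eq_one,
      ← Int.isCoprime_iff_gcd_eq_one, Nat.cast_mul, IsCoprime.mul_left_iff,
      IsCoprime.mul_right_iff, and_iff_right hkd, and_comm]
  have h_dvd (c : ℤ) : Int.gcd c d = 1 ∧ Int.gcd c (k * g : ℕ) = k ↔
      (k : ℤ) ∣ c ∧ Int.gcd c d = 1 ∧ Int.gcd c (k * g : ℕ) = k :=
    (and_iff_right_of_imp fun h => h.2 ▸ Int.gcd_dvd_left c _).symm
  rw [Nat.mul_div_cancel_left _ hk0, Finset.filter_filter,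
    Finset.filter_congr fun c _ => h_dvd c, ← Finset.filter_filter, Finset.sum_filter,
    Finset.sum_filter, mul_assoc, Nat.cast_mul k, sum_Ioc_filter_dvd hk0]
  simp only [h_gcd]
  refine Finset.sum_congr rfl fun a _ => ?_
  push_cast
  rw [mul_div_mul_left _ _ hk']

/-- The sum of all the characters `x ↦ e(xa/q)` of height `d`, weighted by `Υ(a,q)`. -/
def charSum (y : ℕ) (b : ℤ) (d : ℕ) (x : ℤ) : ℂ :=
  ∑ g ∈ y.divisors, ∑ a ∈ Finset.Icc 1 (g * d) with Nat.gcd a (g * d) = 1,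
    Ups y b a (g * d) * e2pi (x * (a / (g * d : ℕ)))

lemma exists_modEq_and_dvd {y d : ℕ} (hyd : y.Coprime d) (b : ℤ) :
    ∃ b' : ℤ, b ≡ b' [ZMOD y] ∧ (d : ℤ) ∣ b' := by
  obtain ⟨s, t, hst⟩ := Nat.isCoprime_iff_coprime.2 hyd
  exact ⟨b * (t * d), Int.modEq_iff_dvd.2 ⟨-(b * s), by linear_combination b * hst⟩, b * t, by ring⟩

section CoprimeHeight

variable {y d : ℕ} (hy : 0 < y) (hd : 0 < d) (hyd : y.Coprime d) {b : ℤ} (hb : IsCoprime b y)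
include hy hd hyd hb

lemma charSum_eq {b' : ℤ} (hbb' : b ≡ b' [ZMOD y]) (hdb' : (d : ℤ) ∣ b') (x : ℤ) :
    charSum y b d x = μ d / Nat.totient d * ∑ e ∈ d.divisors, μ e *
        if ((y * d / e : ℕ) : ℤ) ∣ x - b' then ((y * d / e : ℕ) : ℂ) else 0 := by
  rw [← sum_Ioc_coprime_e2pi_mul_div (Nat.mul_pos hy hd) (dvd_mul_left d y) (x - b'),
    ← sum_divisors_coprime_fractions hy hyd fun t => e2pi ((x - b' : ℤ) * t), Finset.mul_sum]
  refine Finset.sum_congr rfl fun g hg => ?_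
  have hgy := Nat.dvd_of_mem_divisors hg
  rw [← sum_Icc_filter_gcd_eq_sum_Ioc, Finset.mul_sum]
  refine Finset.sum_congr rfl fun a ha => ?_
  have ha' : IsCoprime (a : ℤ) (g * d) := by
    exact_mod_cast Nat.isCoprime_iff_coprime.2 (Finset.mem_filter.1 ha).2
  rw [Ups_eq_moebius hy hd hgy hyd hb (hbb'.of_dvd (Int.natCast_dvd_natCast.2 hgy)) hdb' ha',
    mul_assoc, ← e2pi_add]
  push_cast
  ring_nf

lemma charSum_eq_zero (hsq : ¬ Squarefree d) (x : ℤ) : charSum y b d x = 0 := by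
  obtain ⟨b', hbb', hdb'⟩ := exists_modEq_and_dvd hyd b
  rw [charSum_eq hy hd hyd hb hbb' hdb', ArithmeticFunction.moebius_eq_zero_of_not_squarefree hsq]
  simp

lemma norm_charSum_le {b' : ℤ} (hbb' : b ≡ b' [ZMOD y]) (hdb' : (d : ℤ) ∣ b') (x : ℤ) :
    ‖charSum y b d x‖ ≤ 1 / Nat.totient d * ∑ e ∈ d.divisors,
        if ((y * d / e : ℕ) : ℤ) ∣ x - b' then ((y * d / e : ℕ) : ℝ) else 0 := by
  have h_moebius (n : ℕ) : ‖(μ n : ℂ)‖ ≤ 1 := by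
    rw [Complex.norm_intCast]
    exact_mod_cast ArithmeticFunction.abs_moebius_le_one
  rw [charSum_eq hy hd hyd hb hbb' hdb', norm_mul, norm_div, Complex.norm_natCast]
  gcongr
  · exact h_moebius d
  · refine (norm_sum_le _ _).trans (Finset.sum_le_sum fun e _ => ?_)
    rw [norm_mul, apply_ite norm, Complex.norm_natCast, norm_zero]
    exact mul_le_of_le_one_left (by positivity) (h_moebius e)

end CoprimeHeight

lemma charSum_add_mul {y d : ℕ} (hd : 0 < d) (b x k : ℤ) :
    charSum y b d (x + (y * d : ℕ) * k) = charSum y b d x := by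
  refine Finset.sum_congr rfl fun g hg => Finset.sum_congr rfl fun a _ => ?_
  obtain ⟨h, rfl⟩ := Nat.dvd_of_mem_divisors hg
  have hg' : (g : ℝ) ≠ 0 := Nat.cast_ne_zero.2 (Nat.pos_of_mem_divisors hg).ne'
  have hd' : (d : ℝ) ≠ 0 := Nat.cast_ne_zero.2 hd.ne'
  congr 1
  refine e2pi_congr (h * k * a) ?_
  push_cast
  field_simp

end LowMultiplierArithmetic

section DecayWeight

/-- A weight on the line of total mass `O(1)` living at scale `A`; it dominates the Fourier
coefficients of a smooth bump of width `1 / A`. -/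
def decayWeight (A u : ℝ) : ℝ := A / (A + |u|) ^ 2

lemma decayWeight_nonneg {A : ℝ} (hA : 0 ≤ A) (u : ℝ) : 0 ≤ decayWeight A u := by
  unfold decayWeight
  positivity

lemma sum_range_div_add_sq_le {B : ℝ} (hB : 1 ≤ B) (n : ℕ) :
    ∑ t ∈ Finset.range n, B / (B + t) ^ 2 ≤ 2 := by
  have hB0 : 0 < B := by positivity
  have h_term (t : ℕ) : B / (B + t) ^ 2 ≤ 2 * B / (B + t) - 2 * B / (B + (t + 1 : ℕ)) := by
    push_cast
    rw [div_sub_div _ _ (by positivity) (by positivity),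
      div_le_div_iff₀ (by positivity) (by positivity), ← sub_nonneg]
    calc (0 : ℝ) ≤ B * (B + t) * (B - 1 + t) :=
          mul_nonneg (by positivity) (add_nonneg (sub_nonneg.2 hB) t.cast_nonneg)
      _ = _ := by ring
  calc ∑ t ∈ Finset.range n, B / (B + t) ^ 2
      ≤ ∑ t ∈ Finset.range n, (2 * B / (B + t) - 2 * B / (B + (t + 1 : ℕ))) :=
        Finset.sum_le_sum fun t _ => h_term t
    _ = 2 - 2 * B / (B + n) := by
        rw [Finset.sum_range_sub' fun t : ℕ => 2 * B / (B + t), Nat.cast_zero, add_zero,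
          mul_div_cancel_right₀ _ hB0.ne']
    _ ≤ 2 := sub_le_self _ (by positivity)

section Progression

variable {A : ℝ} {m : ℕ} (hm : 0 < m) (hA : m ≤ A)
include hm hA

lemma tsum_decayWeight_le_of_mul_le_abs {f : ℕ → ℤ} (hf : ∀ t, (m : ℝ) * t ≤ |(f t : ℝ)|) :
    ∑' t, ENNReal.ofReal (decayWeight A (f t)) ≤ ENNReal.ofReal (2 / m) := by
  have hm' : (0 : ℝ) < m := Nat.cast_pos.2 hm
  have hA0 : 0 < A := hm'.trans_le hA
  have h_term (t : ℕ) : decayWeight A (f t) ≤ 1 / m * (A / m / (A / m + t) ^ 2) :=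
    calc decayWeight A (f t) ≤ A / (A + m * t) ^ 2 := by
          unfold decayWeight
          gcongr
          exact hf t
      _ = _ := by field_simp
  refine ENNReal.tsum_le_of_sum_range_le fun n => ?_
  rw [← ENNReal.ofReal_sum_of_nonneg fun t _ => decayWeight_nonneg hA0.le _]
  refine ENNReal.ofReal_le_ofReal ?_
  calc ∑ t ∈ Finset.range n, decayWeight A (f t)
      ≤ 1 / m * ∑ t ∈ Finset.range n, A / m / (A / m + t) ^ 2 := by
        rw [Finset.mul_sum]
        exact Finset.sum_le_sum fun t _ => h_term t
    _ ≤ 1 / m * 2 := by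
        gcongr
        exact sum_range_div_add_sq_le ((one_le_div hm').2 hA) n
    _ = 2 / m := by ring

lemma tsum_decayWeight_add_mul_le (j : ℤ) :
    ∑' t : ℤ, ENNReal.ofReal (decayWeight A (j + m * t : ℤ)) ≤ ENNReal.ofReal (4 / m) := by
  have hm_int : (0 : ℤ) < m := Int.natCast_pos.2 hm
  have h_reduce : ∑' t : ℤ, ENNReal.ofReal (decayWeight A (j + m * t : ℤ)) =
      ∑' t : ℤ, ENNReal.ofReal (decayWeight A (j % m + m * t : ℤ)) := by
    rw [← (Equiv.subRight (j / m)).tsum_eq]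
    refine tsum_congr fun t => ?_
    congr 3
    rw [Equiv.subRight_apply]
    linear_combination -Int.emod_add_mul_ediv j m
  have h_nonneg : (0 : ℝ) ≤ (j % m : ℤ) := Int.cast_nonneg (Int.emod_nonneg j hm_int.ne')
  have h_lt : ((j % m : ℤ) : ℝ) < m := by exact_mod_cast Int.emod_lt_of_pos j hm_int
  rw [h_reduce, tsum_of_nat_of_neg_add_one ENNReal.summable ENNReal.summable,
    show (4 : ℝ) / m = 2 / m + 2 / m by ring, ENNReal.ofReal_add (by positivity) (by positivity)]
  refine add_le_add (tsum_decayWeight_le_of_mul_le_abs hm hA fun t => ?_)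
    (tsum_decayWeight_le_of_mul_le_abs hm hA fun t => ?_)
  · push_cast at h_nonneg ⊢
    exact le_trans (by linarith) (le_abs_self _)
  · push_cast at h_lt ⊢
    exact le_trans (by linarith) (neg_le_abs _)

lemma mul_tsum_ite_dvd_decayWeight_le (j : ℤ) :
    ENNReal.ofReal m *
        ∑' u : ℤ, (if (m : ℤ) ∣ u - j then ENNReal.ofReal (decayWeight A u) else 0) ≤
      ENNReal.ofReal 4 := by
  have h_inj : Function.Injective fun t : ℤ => j + m * t := fun s t h =>
    mul_left_cancel₀ (Int.natCast_ne_zero.2 hm.ne') (add_left_cancel h)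
  have h_reindex : ∑' u : ℤ, (if (m : ℤ) ∣ u - j then ENNReal.ofReal (decayWeight A u) else 0) =
      ∑' t : ℤ, ENNReal.ofReal (decayWeight A (j + m * t : ℤ)) := by
    rw [← h_inj.tsum_eq]
    · simp
    · intro u hu
      obtain ⟨⟨t, ht⟩, -⟩ := ite_ne_right_iff.1 (Function.mem_support.1 hu)
      exact ⟨t, by linear_combination -ht⟩
  rw [h_reindex]
  refine (mul_le_mul_right (tsum_decayWeight_add_mul_le hm hA j) _).trans_eq ?_
  rw [← ENNReal.ofReal_mul (Nat.cast_nonneg _), mul_div_cancel₀ _ (Nat.cast_ne_zero.2 hm.ne')]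

end Progression

lemma tsum_norm_charSum_mul_decayWeight_le {y d : ℕ} (hy : 0 < y) (hd : 0 < d)
    (hyd : y.Coprime d) {b : ℤ} (hb : IsCoprime b y) :
    ∑' u : ℤ, ENNReal.ofReal (‖charSum y b d u‖ * decayWeight ((y * d : ℕ) ^ 2) u) ≤
      ENNReal.ofReal (if Squarefree d then 4 * (d.divisors.card / Nat.totient d) else 0) := by
  split_ifs with hsq
  swap
  · simp [charSum_eq_zero hy hd hyd hb hsq]
  obtain ⟨b', hbb', hdb'⟩ := exists_modEq_and_dvd hyd b
  set w : ℤ → ℝ := fun u => decayWeight ((y * d : ℕ) ^ 2) u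
  have hw (u : ℤ) : 0 ≤ w u := decayWeight_nonneg (by positivity) _
  calc ∑' u : ℤ, ENNReal.ofReal (‖charSum y b d u‖ * w u)
      ≤ ∑' u : ℤ, ENNReal.ofReal (1 / Nat.totient d) * ∑ e ∈ d.divisors,
          ENNReal.ofReal (y * d / e : ℕ) *
            if ((y * d / e : ℕ) : ℤ) ∣ u - b' then ENNReal.ofReal (w u) else 0 := by
        refine ENNReal.tsum_le_tsum fun u => ?_
        refine (ENNReal.ofReal_le_ofReal (mul_le_mul_of_nonneg_right
          (norm_charSum_le hy hd hyd hb hbb' hdb' u) (hw u))).trans_eq ?_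
        rw [mul_assoc, ENNReal.ofReal_mul (by positivity), Finset.sum_mul,
          ENNReal.ofReal_sum_of_nonneg fun e _ => mul_nonneg (by split_ifs <;> positivity) (hw u)]
        simp only [ite_mul, zero_mul, apply_ite ENNReal.ofReal, ENNReal.ofReal_zero, mul_ite,
          mul_zero, ENNReal.ofReal_mul (Nat.cast_nonneg _)]
    _ = ENNReal.ofReal (1 / Nat.totient d) * ∑ e ∈ d.divisors, ENNReal.ofReal (y * d / e : ℕ) *
          ∑' u : ℤ, if ((y * d / e : ℕ) : ℤ) ∣ u - b' then ENNReal.ofReal (w u) else 0 := by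
        rw [ENNReal.tsum_mul_left, Summable.tsum_finsetSum fun _ _ => ENNReal.summable]
        simp_rw [ENNReal.tsum_mul_left]
    _ ≤ ENNReal.ofReal (1 / Nat.totient d) * ∑ _ ∈ d.divisors, ENNReal.ofReal 4 := by
        gcongr with e he
        have h_dvd : e ∣ y * d := (Nat.dvd_of_mem_divisors he).mul_left y
        refine mul_tsum_ite_dvd_decayWeight_le ?_ ?_ b'
        · exact Nat.div_pos (Nat.le_of_dvd (Nat.mul_pos hy hd) h_dvd) (Nat.pos_of_mem_divisors he)
        · exact_mod_cast (Nat.div_le_self _ _).trans (Nat.le_self_pow two_ne_zero _)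
    _ = ENNReal.ofReal (4 * (d.divisors.card / Nat.totient d)) := by
        rw [Finset.sum_const, nsmul_eq_mul, ← ENNReal.ofReal_natCast,
          ← ENNReal.ofReal_mul (by positivity), ← ENNReal.ofReal_mul (by positivity)]
        ring_nf

end DecayWeight

section BumpKernels

open scoped FourierTransform ContDiff

lemma exists_norm_fourier_le {f : ℝ → ℂ} (hf : ContDiff ℝ 2 f) (hfc : HasCompactSupport f) :
    ∃ C : ℝ, 0 < C ∧ ∀ v : ℝ, ‖𝓕 f v‖ ≤ C / (1 + |v|) ^ 2 := by
  have h_support (n : ℕ) : HasCompactSupport (iteratedDeriv n f) := by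
    induction n with
    | zero => rwa [iteratedDeriv_zero]
    | succ n ih =>
      rw [iteratedDeriv_succ]
      exact ih.deriv
  have h_integrable (n : ℕ) (hn : (n : ℕ∞) ≤ 2) : Integrable (iteratedDeriv n f) :=
    (hf.continuous_iteratedDeriv n (by exact_mod_cast hn)).integrable_of_hasCompactSupport
      (h_support n)
  set M₀ := ∫ s, ‖f s‖
  set M₂ := ∫ s, ‖iteratedDeriv 2 f s‖
  have : 0 ≤ M₀ := integral_nonneg fun _ => norm_nonneg _
  have : 0 ≤ M₂ := integral_nonneg fun _ => norm_nonneg _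
  refine ⟨2 * (M₀ + M₂) + 1, by positivity, fun v => ?_⟩
  have h_zero : ‖𝓕 f v‖ ≤ M₀ :=
    VectorFourier.norm_fourierIntegral_le_integral_norm Real.fourierChar volume (innerₗ ℝ) f v
  have h_two : v ^ 2 * ‖𝓕 f v‖ ≤ M₂ :=
    calc v ^ 2 * ‖𝓕 f v‖ ≤ (2 * Real.pi) ^ 2 * v ^ 2 * ‖𝓕 f v‖ := by
          gcongr
          exact le_mul_of_one_le_left (sq_nonneg v) (one_le_pow₀ (by linarith [Real.pi_gt_three]))
      _ = ‖𝓕 (iteratedDeriv 2 f) v‖ := by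
          rw [Real.fourier_iteratedDeriv (N := 2) hf h_integrable le_rfl]
          simp [mul_pow]
      _ ≤ M₂ := VectorFourier.norm_fourierIntegral_le_integral_norm Real.fourierChar volume
          (innerₗ ℝ) _ v
  rw [le_div_iff₀ (by positivity)]
  calc ‖𝓕 f v‖ * (1 + |v|) ^ 2 ≤ ‖𝓕 f v‖ * (2 * (1 + v ^ 2)) := by
        gcongr
        rw [← sq_abs v]
        linarith [sq_nonneg (1 - |v|)]
    _ = 2 * (‖𝓕 f v‖ + v ^ 2 * ‖𝓕 f v‖) := by ring
    _ ≤ 2 * (M₀ + M₂) + 1 := by linarith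

/-- The Fourier coefficients of the bump `χ(A·)` on `[-1/2, 1/2]`. -/
def bumpKer (χ : ℝ → ℝ) (A : ℝ) (u : ℤ) : ℂ :=
  ∫ η in (-(1 / 2) : ℝ)..(1 / 2), (χ (A * η) : ℂ) * e2pi (u * η)

/-- The Fourier coefficients of the half bump `χ(A·) 1_{[0,1/2]}`; it enters because the frequency
`1` is an endpoint of the interval `[0,1]` over which the kernels `L` are integrated. -/
def halfBumpKer (χ : ℝ → ℝ) (A : ℝ) (u : ℤ) : ℂ :=
  ∫ η in (0 : ℝ)..(1 / 2), (χ (A * η) : ℂ) * e2pi (u * η)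

variable {χ : ℝ → ℝ} (hχ0 : ∀ x : ℝ, x ∉ Set.Icc (-(1 / 4) : ℝ) (1 / 4) → χ x = 0)
include hχ0

lemma intervalIntegral_bump_mul_e2pi {A a b : ℝ} (hA : 0 < A) (ha : a < -(1 / (4 * A)))
    (hb : 1 / (4 * A) ≤ b) (u : ℤ) :
    ∫ η in a..b, (χ (A * η) : ℂ) * e2pi (u * η) = ∫ η, (χ (A * η) : ℂ) * e2pi (u * η) := by
  refine intervalIntegral.integral_eq_integral_of_support_subset fun η hη => ?_
  have h_mem : A * η ∈ Set.Icc (-(1 / 4) : ℝ) (1 / 4) := by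
    by_contra h
    exact hη (by simp [hχ0 _ h])
  have h_abs : |η| ≤ 1 / (4 * A) := by
    rw [Set.mem_Icc, ← abs_le, abs_mul, abs_of_pos hA] at h_mem
    rw [le_div_iff₀ (by positivity)]
    linarith
  exact ⟨ha.trans_le (abs_le.1 h_abs).1, (abs_le.1 h_abs).2.trans hb⟩

lemma bumpKer_eq_integral {A : ℝ} (hA : 1 ≤ A) (u : ℤ) :
    bumpKer χ A u = ∫ η, (χ (A * η) : ℂ) * e2pi (u * η) := by
  have h_lt : 1 / (4 * A) < 1 / 2 := one_div_lt_one_div_of_lt two_pos (by linarith)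
  exact intervalIntegral_bump_mul_e2pi hχ0 (by linarith) (neg_lt_neg h_lt) h_lt.le u

lemma bumpKer_eq_fourier {A : ℝ} (hA : 1 ≤ A) (u : ℤ) :
    bumpKer χ A u = (A⁻¹ : ℝ) • 𝓕 (fun s => (χ s : ℂ)) (-(u / A)) := by
  have hA0 : A ≠ 0 := by positivity
  have h_fourier : 𝓕 (fun s => (χ s : ℂ)) (-(u / A)) = ∫ s, (χ s : ℂ) * e2pi (u / A * s) := by
    rw [Real.fourier_real_eq_integral_exp_smul]
    refine integral_congr_ae (.of_forall fun s => ?_)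
    simp only [smul_eq_mul, e2pi]
    push_cast
    ring_nf
  have h_scale := Measure.integral_comp_mul_left (fun s => (χ s : ℂ) * e2pi (u / A * s)) A
  rw [abs_of_pos (by positivity)] at h_scale
  rw [bumpKer_eq_integral hχ0 hA, h_fourier, ← h_scale]
  simp only [← mul_assoc, div_mul_cancel₀ _ hA0]

lemma exists_norm_bumpKer_le (hχ : ContDiff ℝ 2 χ) :
    ∃ C : ℝ, 0 < C ∧ ∀ A : ℝ, 1 ≤ A → ∀ u : ℤ, ‖bumpKer χ A u‖ ≤ C * decayWeight A u := by
  have h_smooth : ContDiff ℝ 2 fun s => (χ s : ℂ) := Complex.ofRealCLM.contDiff.comp hχ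
  have h_support : HasCompactSupport fun s => (χ s : ℂ) :=
    .intro isCompact_Icc fun s hs => by rw [hχ0 s hs, Complex.ofReal_zero]
  obtain ⟨C, hC, h_bound⟩ := exists_norm_fourier_le h_smooth h_support
  refine ⟨C, hC, fun A hA u => ?_⟩
  have hA0 : 0 < A := by positivity
  rw [bumpKer_eq_fourier hχ0 hA, norm_smul, Real.norm_of_nonneg (by positivity)]
  calc A⁻¹ * ‖𝓕 (fun s => (χ s : ℂ)) (-(u / A))‖ ≤ A⁻¹ * (C / (1 + |-(u / A)|) ^ 2) := by
        gcongr
        exact h_bound _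
    _ = C * decayWeight A u := by
        rw [abs_neg, abs_div, abs_of_pos hA0, decayWeight]
        field_simp

lemma integral_neg_one_zero_bump_mul_e2pi (hχ : Continuous χ) {A : ℝ} (hA : 1 ≤ A) (u : ℤ) :
    ∫ η in (-1 : ℝ)..0, (χ (A * η) : ℂ) * e2pi (u * η) = bumpKer χ A u - halfBumpKer χ A u := by
  have h_lt : 1 / (4 * A) < 1 / 2 := one_div_lt_one_div_of_lt two_pos (by linarith)
  have h_intervalIntegrable (a b : ℝ) :
      IntervalIntegrable (fun η => (χ (A * η) : ℂ) * e2pi (u * η)) volume a b :=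
    Continuous.intervalIntegrable (by fun_prop) a b
  rw [bumpKer_eq_integral hχ0 hA, halfBumpKer,
    ← intervalIntegral_bump_mul_e2pi hχ0 (a := -1) (by linarith) (by linarith) h_lt.le,
    ← intervalIntegral.integral_add_adjacent_intervals (h_intervalIntegrable (-1) 0)
      (h_intervalIntegrable 0 (1 / 2)), add_sub_cancel_right]

end BumpKernels

section LowKernel

/-- The average of a kernel `k` over `⌈N/ℓ⌉` steps of length `ℓ`. -/
def stepAvg (N ℓ : ℕ) (k : ℤ → ℂ) (x : ℤ) : ℂ :=
  ((1 / (N / ℓ) : ℝ) : ℂ) * ∑ n ∈ Finset.range ⌈(N / ℓ : ℝ)⌉₊, k (x - ℓ * n)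

/-- The heights below `Q` of the denominators `q` for which `Υ(a,q)` does not vanish. -/
def heights (y : ℕ) (Q : ℝ) : Finset ℕ :=
  {d ∈ Finset.range ⌈Q⌉₊ | 0 < d ∧ y.Coprime d}

lemma mem_heights {y : ℕ} {Q : ℝ} {d : ℕ} :
    d ∈ heights y Q ↔ (d : ℝ) < Q ∧ 0 < d ∧ y.Coprime d := by
  rw [heights, Finset.mem_filter, Finset.mem_range, Nat.lt_ceil]

section Denominators

variable {y : ℕ} (hy : 0 < y)
include hy

lemma coprime_div_gcd_of_coprime {q : ℕ} (h : (y.gcd q).Coprime (q / y.gcd q)) :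
    y.Coprime (q / y.gcd q) := by
  have h_div := Nat.coprime_div_gcd_div_gcd (Nat.gcd_pos_of_pos_left q hy)
  have h_mul := h.mul_left h_div
  rwa [Nat.mul_div_cancel' (Nat.gcd_dvd_left y q)] at h_mul

lemma hgt_mul_of_dvd_of_coprime {g d : ℕ} (hgy : g ∣ y) (hyd : y.Coprime d) :
    hgt y (g * d) = d := by
  rw [hgt, gcd_mul_eq_of_dvd_of_coprime hgy hyd, lcm_mul_eq_of_dvd_of_coprime hgy hyd,
    Nat.mul_div_cancel_left _ (Nat.pos_of_dvd_of_pos hgy hy), Nat.mul_div_cancel_left _ hy,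
    hyd.coprime_dvd_left hgy, if_neg (by simp)]

lemma Ups_eq_zero_of_not_coprime {q : ℕ} (hq : 0 < q)
    (h : ¬ (y.gcd q).Coprime (q / y.gcd q)) (b : ℤ) {a : ℕ} (ha : a.Coprime q) :
    Ups y b a q = 0 := by
  have h_dvd : y.gcd q ∣ q := Nat.gcd_dvd_right y q
  have h_mul : y.gcd q * (q / y.gcd q) = q := Nat.mul_div_cancel' h_dvd
  have h_zero := Ups_eq_zero (Nat.gcd_pos_of_pos_left q hy)
    (Nat.div_pos (Nat.le_of_dvd hq h_dvd) (Nat.gcd_pos_of_pos_left q hy))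
    (by rw [h_mul]) h b (a := a) (by exact_mod_cast h_mul ▸ Nat.isCoprime_iff_coprime.2 ha)
  rwa [h_mul] at h_zero

lemma sum_filter_hgt_lt {M : Type*} [AddCommMonoid M] (Q : ℝ) {T : ℕ → M}
    (hT : ∀ q, 0 < q → ¬ (y.gcd q).Coprime (q / y.gcd q) → T q = 0) :
    ∑ q ∈ Finset.Icc 1 (y * ⌈Q⌉₊) with (hgt y q : ℝ) < Q, T q =
      ∑ d ∈ heights y Q, ∑ g ∈ y.divisors, T (g * d) := by
  rw [← Finset.sum_filter_of_ne (p := fun q => (y.gcd q).Coprime (q / y.gcd q)) fun q hq h =>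
      not_imp_comm.1 (hT q (Finset.mem_Icc.1 (Finset.mem_filter.1 hq).1).1) h,
    Finset.sum_sigma']
  refine Finset.sum_nbij' (fun q => ⟨q / y.gcd q, y.gcd q⟩) (fun p => p.2 * p.1) ?_ ?_ ?_ ?_ ?_
  · intro q hq
    simp only [Finset.mem_filter, Finset.mem_Icc] at hq
    obtain ⟨⟨⟨hq1, -⟩, hqQ⟩, h_coprime⟩ := hq
    have h_dvd : y.gcd q ∣ q := Nat.gcd_dvd_right y q
    have hyd := coprime_div_gcd_of_coprime hy h_coprime
    have h_hgt := hgt_mul_of_dvd_of_coprime hy (Nat.gcd_dvd_left y q) hyd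
    rw [Nat.mul_div_cancel' h_dvd] at h_hgt
    rw [Finset.mem_sigma, mem_heights, Nat.mem_divisors]
    exact ⟨⟨h_hgt ▸ hqQ, Nat.div_pos (Nat.le_of_dvd hq1 h_dvd) (Nat.gcd_pos_of_pos_left q hy),
      hyd⟩, Nat.gcd_dvd_left y q, hy.ne'⟩
  · rintro ⟨d, g⟩ hdg
    simp only [Finset.mem_sigma, mem_heights] at hdg
    obtain ⟨⟨hdQ, hd, hyd⟩, hg⟩ := hdg
    have hg0 := Nat.pos_of_mem_divisors hg
    have hgy := Nat.dvd_of_mem_divisors hg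
    simp only [Finset.mem_filter, Finset.mem_Icc]
    rw [hgt_mul_of_dvd_of_coprime hy hgy hyd, gcd_mul_eq_of_dvd_of_coprime hgy hyd,
      Nat.mul_div_cancel_left _ hg0]
    exact ⟨⟨⟨Nat.mul_pos hg0 hd, Nat.mul_le_mul (Nat.le_of_dvd hy hgy) (Nat.lt_ceil.2 hdQ).le⟩,
      hdQ⟩, hyd.coprime_dvd_left hgy⟩
  · exact fun q _ => Nat.mul_div_cancel' (Nat.gcd_dvd_right y q)
  · rintro ⟨d, g⟩ hdg
    simp only [Finset.mem_sigma, mem_heights] at hdg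
    obtain ⟨⟨-, -, hyd⟩, hg⟩ := hdg
    simp only [gcd_mul_eq_of_dvd_of_coprime (Nat.dvd_of_mem_divisors hg) hyd,
      Nat.mul_div_cancel_left _ (Nat.pos_of_mem_divisors hg)]
  · exact fun q _ => by rw [Nat.mul_div_cancel' (Nat.gcd_dvd_right y q)]

end Denominators

section Kernels

variable {χ : ℝ → ℝ} (hχ : Continuous χ)
include hχ

lemma Lker_eq_stepAvg (y : ℕ) (b : ℤ) (N a q : ℕ) (x : ℤ) :
    Lker χ y b N a q x = Ups y b a q * e2pi (x * (a / q)) * stepAvg N (y.lcm q) (fun u =>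
      ∫ η in (0 - a / q : ℝ)..(1 - a / q), (χ ((y.lcm q : ℕ) ^ 2 * η) : ℂ) * e2pi (u * η)) x := by
  set ℓ := y.lcm q
  have h_phase (n : ℕ) (ξ : ℝ) : e2pi (-(n * (ℓ * (ξ - a / q)))) * e2pi (x * ξ) =
      e2pi (x * (a / q)) * e2pi ((x - ℓ * n : ℤ) * (ξ - a / q)) := by
    rw [← e2pi_add, ← e2pi_add]
    push_cast
    ring_nf
  have h_integrand (ξ : ℝ) : Lhat χ y b N a q ξ * e2pi (x * ξ) =
      Ups y b a q * e2pi (x * (a / q)) * (((1 / (N / ℓ) : ℝ) : ℂ) *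
        ∑ n ∈ Finset.range ⌈(N / ℓ : ℝ)⌉₊,
          (χ (ℓ ^ 2 * (ξ - a / q)) : ℂ) * e2pi ((x - ℓ * n : ℤ) * (ξ - a / q))) := by
    simp only [Lhat, Mhat, Finset.mul_sum, Finset.sum_mul]
    refine Finset.sum_congr rfl fun n _ => ?_
    linear_combination (Ups y b a q * ((1 / (N / ℓ) : ℝ) : ℂ) * χ (ℓ ^ 2 * (ξ - a / q))) *
      h_phase n ξ
  simp_rw [Lker, h_integrand]
  rw [intervalIntegral.integral_const_mul, intervalIntegral.integral_const_mul,
    intervalIntegral.integral_comp_sub_right fun η => ∑ n ∈ Finset.range ⌈(N / ℓ : ℝ)⌉₊,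
      (χ (ℓ ^ 2 * η) : ℂ) * e2pi ((x - ℓ * n : ℤ) * η),
    intervalIntegral.integral_finsetSum fun n _ => Continuous.intervalIntegrable (by fun_prop) _ _,
    stepAvg]

variable (hχ0 : ∀ x : ℝ, x ∉ Set.Icc (-(1 / 4) : ℝ) (1 / 4) → χ x = 0) {y : ℕ} (hy : 0 < y)
include hχ0 hy

lemma Lker_eq_stepAvg_bumpKer (b : ℤ) (N : ℕ) {a q : ℕ} (ha : 0 < a) (haq : a < q) (x : ℤ) :
    Lker χ y b N a q x = Ups y b a q * e2pi (x * (a / q)) *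
      stepAvg N (y.lcm q) (bumpKer χ ((y.lcm q : ℕ) ^ 2)) x := by
  have hq : (2 : ℝ) ≤ q := by exact_mod_cast (by omega : 2 ≤ q)
  have hq0 : (0 : ℝ) < q := by linarith
  have hqℓ : (q : ℝ) ≤ (y.lcm q : ℕ) :=
    Nat.cast_le.2 (Nat.le_of_dvd (Nat.lcm_pos hy (by omega)) (Nat.dvd_lcm_right _ _))
  have h_sq : (q : ℝ) ≤ (y.lcm q : ℕ) ^ 2 := by nlinarith
  have h_lt : 1 / (4 * ((y.lcm q : ℕ) : ℝ) ^ 2) < 1 / q :=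
    one_div_lt_one_div_of_lt hq0 (by linarith)
  have h_left : 1 / (q : ℝ) ≤ a / q := by
    gcongr
    exact_mod_cast ha
  have h_right : 1 / (q : ℝ) ≤ 1 - a / q := by
    rw [le_sub_iff_add_le, ← add_div, div_le_one hq0]
    exact_mod_cast (by omega : 1 + a ≤ q)
  rw [Lker_eq_stepAvg hχ]
  congr 2
  funext u
  rw [bumpKer_eq_integral hχ0 (by linarith),
    intervalIntegral_bump_mul_e2pi hχ0 (by linarith) (by linarith) (by linarith)]

lemma Lker_one_one_eq (b : ℤ) (N : ℕ) (x : ℤ) :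
    Lker χ y b N 1 1 x = Ups y b 1 1 * e2pi (x * ((1 : ℕ) / (1 : ℕ))) *
        stepAvg N (y.lcm 1) (bumpKer χ ((y.lcm 1 : ℕ) ^ 2)) x -
      stepAvg N y (halfBumpKer χ (y ^ 2)) x := by
  have h_Ups : Ups y b 1 1 = 1 := by
    have hφ : (Nat.totient y : ℂ) ≠ 0 := Nat.cast_ne_zero.2 (Nat.totient_pos.2 hy).ne'
    simp only [Ups, Nat.lcm_one_right, div_self hφ, Nat.gcd_one_right, Nat.cast_one,
      Int.emod_one, and_self, Finset.filter_true, Finset.Icc_self, Finset.sum_singleton, one_mul]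
    exact e2pi_eq_one_iff.2 ⟨-1, by norm_num⟩
  have h_phase : e2pi (x * ((1 : ℕ) / (1 : ℕ))) = 1 := e2pi_eq_one_iff.2 ⟨x, by simp⟩
  have hy_sq : (1 : ℝ) ≤ y ^ 2 := one_le_pow₀ (Nat.one_le_cast.2 hy)
  rw [Lker_eq_stepAvg hχ, Nat.cast_one (R := ℤ), h_Ups, h_phase, Nat.lcm_one_right]
  simp only [Nat.cast_one, div_one, sub_self, zero_sub,
    integral_neg_one_zero_bump_mul_e2pi hχ0 hχ hy_sq, stepAvg, Finset.sum_sub_distrib, mul_sub,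
    one_mul]

lemma sum_Lker_eq (b : ℤ) (N : ℕ) (q : ℕ) (x : ℤ) :
    ∑ a ∈ Finset.Icc 1 q with Nat.gcd a q = 1, Lker χ y b N a q x =
      (∑ a ∈ Finset.Icc 1 q with Nat.gcd a q = 1, Ups y b a q * e2pi (x * (a / q)) *
        stepAvg N (y.lcm q) (bumpKer χ ((y.lcm q : ℕ) ^ 2)) x) -
      if q = 1 then stepAvg N y (halfBumpKer χ (y ^ 2)) x else 0 := by
  split_ifs with hq
  · subst hq
    have h_filter : {a ∈ Finset.Icc 1 1 | Nat.gcd a 1 = 1} = {1} := by simp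
    simp only [h_filter, Finset.sum_singleton]
    exact Lker_one_one_eq hχ hχ0 hy b N x
  · rw [sub_zero]
    refine Finset.sum_congr rfl fun a ha => ?_
    simp only [Finset.mem_filter, Finset.mem_Icc] at ha
    have haq : a ≠ q := by
      rintro rfl
      exact hq (by simpa using ha.2)
    exact Lker_eq_stepAvg_bumpKer hχ hχ0 hy b N ha.1.1 (ha.1.2.lt_of_ne haq) x

lemma LoK_eq (b : ℤ) (N : ℕ) (Q : ℝ) (x : ℤ) :
    LoK χ y b N Q x =
      ∑ d ∈ heights y Q, charSum y b d x *
        stepAvg N (y * d) (bumpKer χ ((y * d : ℕ) ^ 2)) x -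
      if 1 < Q then stepAvg N y (halfBumpKer χ (y ^ 2)) x else 0 := by
  have h_one : 1 ∈ {q ∈ Finset.Icc 1 (y * ⌈Q⌉₊) | (hgt y q : ℝ) < Q} ↔ 1 < Q := by
    have h_hgt : hgt y 1 = 1 :=
      hgt_mul_of_dvd_of_coprime hy (one_dvd y) (Nat.coprime_one_right y)
    rw [Finset.mem_filter, Finset.mem_Icc, h_hgt, Nat.cast_one]
    exact ⟨fun h => h.2, fun h => ⟨⟨le_rfl, Nat.mul_pos hy (Nat.ceil_pos.2 (by linarith))⟩, h⟩⟩
  simp only [LoK, sum_Lker_eq hχ hχ0 hy]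
  rw [Finset.sum_sub_distrib, Finset.sum_ite_eq', sum_filter_hgt_lt hy Q]
  · simp only [h_one]
    congr 1
    refine Finset.sum_congr rfl fun d hd => ?_
    rw [charSum, Finset.sum_mul]
    refine Finset.sum_congr rfl fun g hg => ?_
    rw [Finset.sum_mul, lcm_mul_eq_of_dvd_of_coprime (Nat.dvd_of_mem_divisors hg)
      (mem_heights.1 hd).2.2]
  · refine fun q hq h => Finset.sum_eq_zero fun a ha => ?_
    rw [Ups_eq_zero_of_not_coprime hy hq h b (Finset.mem_filter.1 ha).2, zero_mul, zero_mul]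

end Kernels

end LowKernel

section FourierInversion

variable {χ : ℝ → ℝ} (hχ : Continuous χ)
  (hχ0 : ∀ x : ℝ, x ∉ Set.Icc (-(1 / 4) : ℝ) (1 / 4) → χ x = 0) {A : ℝ} (hA : 1 ≤ A)

lemma fourierCoeff_liftIco_bump (n : ℤ) :
    fourierCoeff (AddCircle.liftIco (1 : ℝ) (-(1 / 2)) fun η => (χ (A * η) : ℂ)) n =
      bumpKer χ A (-n) := by
  rw [fourierCoeff_liftIco_eq, fourierCoeffOn_eq_integral, bumpKer,
    show (-(1 / 2) : ℝ) + 1 = 1 / 2 by norm_num,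
    show (1 : ℝ) / (1 / 2 - -(1 / 2)) = 1 by norm_num, one_smul]
  refine intervalIntegral.integral_congr fun η _ => ?_
  simp only [smul_eq_mul]
  rw [mul_comm]
  congr 1
  rw [fourier_eq_e2pi]
  norm_num

include hχ hχ0 hA

lemma hasSum_bumpKer_mul_e2pi (hs : Summable (bumpKer χ A)) {η : ℝ}
    (hη : η ∈ Set.Ico (-(1 / 2) : ℝ) (1 / 2)) :
    HasSum (fun u : ℤ => bumpKer χ A u * e2pi (-(u * η))) (χ (A * η) : ℂ) := by
  have h_half : (-(1 / 2) : ℝ) + 1 = 1 / 2 := by norm_num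
  have h_ends : (χ (A * -(1 / 2)) : ℂ) = χ (A * (-(1 / 2) + 1)) := by
    rw [h_half, hχ0 _ fun h => by linarith [h.1], hχ0 _ fun h => by linarith [h.2]]
  have : Fact ((0 : ℝ) < 1) := ⟨one_pos⟩
  let f : C(AddCircle (1 : ℝ), ℂ) := ⟨AddCircle.liftIco 1 (-(1 / 2)) fun η => (χ (A * η) : ℂ),
    AddCircle.liftIco_continuous h_ends (by fun_prop)⟩
  have h_coeff (n : ℤ) : fourierCoeff f n = bumpKer χ A (-n) := fourierCoeff_liftIco_bump n
  have h_summable : Summable (fourierCoeff f) :=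
    ((Equiv.neg ℤ).summable_iff.2 hs).congr fun n => (h_coeff n).symm
  have h_value : f (η : AddCircle (1 : ℝ)) = (χ (A * η) : ℂ) :=
    AddCircle.liftIco_coe_apply (f := fun η => (χ (A * η) : ℂ)) (by rwa [h_half])
  rw [← (Equiv.neg ℤ).hasSum_iff, ← h_value]
  convert has_pointwise_sum_fourier_series_of_summable h_summable (η : AddCircle (1 : ℝ))
    using 2 with n
  rw [h_coeff, fourier_eq_e2pi, smul_eq_mul]
  simp

variable (hs : Summable fun u => ‖bumpKer χ A u‖)
include hs

lemma hasSum_bumpKer_mul_halfKer (x : ℤ) :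
    HasSum (fun u : ℤ => bumpKer χ A u * halfKer (x - u)) (halfBumpKer χ A x) := by
  have h_ne : ∀ᵐ η : ℝ, η ≠ 1 / 2 := by simp [ae_iff]
  have h_int (u : ℤ) : bumpKer χ A u * halfKer (x - u) =
      ∫ η in (0 : ℝ)..(1 / 2), bumpKer χ A u * e2pi ((x - u : ℤ) * η) := by
    rw [intervalIntegral.integral_const_mul, halfKer]
  simp only [h_int]
  refine intervalIntegral.hasSum_integral_of_dominated_convergence
    (fun u _ => ‖bumpKer χ A u‖)
    (fun u => (by fun_prop : Continuous fun η : ℝ =>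
      bumpKer χ A u * e2pi ((x - u : ℤ) * η)).aestronglyMeasurable)
    (fun u => .of_forall fun η _ => by rw [norm_mul, norm_e2pi, mul_one])
    (.of_forall fun _ _ => hs) (by simp) ?_
  filter_upwards [h_ne] with η hη h_mem
  rw [Set.uIoc_of_le (by norm_num)] at h_mem
  have h_sum := (hasSum_bumpKer_mul_e2pi hχ hχ0 hA hs.of_norm
    ⟨by linarith [h_mem.1], h_mem.2.lt_of_ne hη⟩).mul_right (e2pi (x * η))
  refine h_sum.congr_fun fun u => ?_
  rw [mul_assoc, ← e2pi_add]
  congr 2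
  push_cast
  ring

lemma hasSum_bumpKer_mul_halfProj (F : Finset ℤ) (x : ℤ) :
    HasSum (fun u : ℤ => bumpKer χ A u * halfProj F (x - u))
      (∑ z ∈ F, halfBumpKer χ A (x - z)) := by
  refine (hasSum_sum fun z (_ : z ∈ F) =>
    hasSum_bumpKer_mul_halfKer hχ hχ0 hA hs (x - z)).congr_fun fun u => ?_
  simp only [halfProj, Finset.mul_sum, sub_right_comm]

end FourierInversion

section StepAverages

lemma sum_range_le_mul_avgMax (l : ℕ) (g : ℤ → ℝ≥0∞) (x : ℤ) (n : ℕ) :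
    ∑ i ∈ Finset.range n, g (x - l * i) ≤ n * avgMax l g x := by
  cases n with
  | zero => simp
  | succ n =>
    rw [mul_comm, ← ENNReal.div_le_iff_le_mul (by simp) (by simp)]
    exact le_iSup (fun n : ℕ => (∑ i ∈ Finset.range (n + 1), g (x - l * i)) /
      ((n + 1 : ℕ) : ℝ≥0∞)) n

lemma ofReal_one_div_mul_ceil_le_two {t : ℝ} (ht : 1 ≤ t) :
    ENNReal.ofReal (1 / t) * ⌈t⌉₊ ≤ 2 := by
  rw [← ENNReal.ofReal_natCast, ← ENNReal.ofReal_mul (by positivity), ← ENNReal.ofReal_ofNat,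
    one_div_mul_eq_div]
  refine ENNReal.ofReal_le_ofReal ?_
  rw [div_le_iff₀ (by linarith)]
  linarith [Nat.ceil_lt_add_one (zero_le_one.trans ht)]

lemma enorm_stepAvg_le {N ℓ : ℕ} (hℓ : 0 < ℓ) (hN : ℓ ≤ N) {f : ℤ → ℂ} {a g : ℤ → ℝ≥0∞}
    (hf : ∀ w, ‖f w‖ₑ ≤ ∑' u, a u * g (w - u)) (x : ℤ) :
    ‖stepAvg N ℓ f x‖ₑ ≤ 2 * ∑' u, a u * avgMax ℓ g (x - u) := by
  have h_one_le : 1 ≤ (N : ℝ) / ℓ := (one_le_div (by exact_mod_cast hℓ)).2 (by exact_mod_cast hN)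
  set M := ⌈(N : ℝ) / ℓ⌉₊
  calc ‖stepAvg N ℓ f x‖ₑ
      ≤ ENNReal.ofReal (1 / (N / ℓ)) * ∑ n ∈ Finset.range M, ‖f (x - ℓ * n)‖ₑ := by
        rw [stepAvg, enorm_mul, ← ofReal_norm, Complex.norm_real,
          Real.norm_of_nonneg (by positivity)]
        exact mul_le_mul_right (enorm_sum_le _ _) _
    _ ≤ ENNReal.ofReal (1 / (N / ℓ)) * ∑ n ∈ Finset.range M, ∑' u, a u * g (x - ℓ * n - u) :=
        mul_le_mul_right (Finset.sum_le_sum fun n _ => hf _) _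
    _ = ENNReal.ofReal (1 / (N / ℓ)) * ∑' u, a u * ∑ n ∈ Finset.range M, g (x - u - ℓ * n) := by
        rw [← Summable.tsum_finsetSum fun _ _ => ENNReal.summable]
        simp only [Finset.mul_sum, sub_right_comm]
    _ ≤ ENNReal.ofReal (1 / (N / ℓ)) * ∑' u, M * (a u * avgMax ℓ g (x - u)) := by
        refine mul_le_mul_right (ENNReal.tsum_le_tsum fun u => ?_) _
        rw [mul_left_comm]
        exact mul_le_mul_right (sum_range_le_mul_avgMax ℓ g _ M) _
    _ ≤ 2 * ∑' u, a u * avgMax ℓ g (x - u) := by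
        rw [ENNReal.tsum_mul_left, ← mul_assoc]
        exact mul_le_mul_left (ofReal_one_div_mul_ceil_le_two h_one_le) _

lemma sum_mul_stepAvg (F : Finset ℤ) (N ℓ : ℕ) {c : ℤ → ℂ} (hc : ∀ x m : ℤ, c (x + ℓ * m) = c x)
    (k : ℤ → ℂ) (x : ℤ) :
    ∑ z ∈ F, c (x - z) * stepAvg N ℓ k (x - z) =
      stepAvg N ℓ (fun w => ∑ z ∈ F, c (w - z) * k (w - z)) x := by
  simp only [stepAvg]
  rw [Finset.sum_comm, Finset.mul_sum]
  refine Finset.sum_congr rfl fun z _ => ?_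
  rw [mul_left_comm, Finset.mul_sum]
  congr 1
  refine Finset.sum_congr rfl fun n _ => ?_
  rw [sub_right_comm x (ℓ * n), ← hc (x - z) (-n), mul_neg, ← sub_eq_add_neg]

lemma enorm_sum_sub_le_tsum (F : Finset ℤ) (k : ℤ → ℂ) (w : ℤ) :
    ‖∑ z ∈ F, k (w - z)‖ₑ ≤ ∑' u, ‖k u‖ₑ * (F : Set ℤ).indicator 1 (w - u) := by
  rw [← (Equiv.subLeft w).tsum_eq]
  simp only [Equiv.subLeft_apply, sub_sub_cancel]
  calc ‖∑ z ∈ F, k (w - z)‖ₑ ≤ ∑ z ∈ F, ‖k (w - z)‖ₑ := enorm_sum_le _ _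
    _ = ∑ z ∈ F, ‖k (w - z)‖ₑ * (F : Set ℤ).indicator 1 z :=
        Finset.sum_congr rfl fun z hz => by
          rw [Set.indicator_of_mem (Finset.mem_coe.2 hz), Pi.one_apply, mul_one]
    _ ≤ ∑' z, ‖k (w - z)‖ₑ * (F : Set ℤ).indicator 1 z := ENNReal.sum_le_tsum F

end StepAverages

section PointwiseBound

/-- The majorant of the main part of the low convolutions: the `d`-th kernels are convolved with
maximal averages of `1_F` along progressions of step `y * d`. -/
def mainMax (χ : ℝ → ℝ) (y : ℕ) (b : ℤ) (Q : ℝ) (F : Finset ℤ) (x : ℤ) : ℝ≥0∞ :=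
  ∑ d ∈ heights y Q, ∑' u : ℤ, ‖charSum y b d u * bumpKer χ ((y * d : ℕ) ^ 2) u‖ₑ *
    avgMax (y * d) ((F : Set ℤ).indicator 1) (x - u)

/-- The majorant of the endpoint term `a = q = 1` of the low convolutions, which involves the
half-line projection of `1_F`. -/
def endpointMax (χ : ℝ → ℝ) (y : ℕ) (F : Finset ℤ) (x : ℤ) : ℝ≥0∞ :=
  ∑' u : ℤ, ‖bumpKer χ (y ^ 2) u‖ₑ * avgMax y (fun w => ‖halfProj F w‖ₑ) (x - u)

variable {χ : ℝ → ℝ} (hχ : Continuous χ)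
  (hχ0 : ∀ x : ℝ, x ∉ Set.Icc (-(1 / 4) : ℝ) (1 / 4) → χ x = 0) {y : ℕ} (hy : 0 < y)
include hχ hχ0 hy

lemma LoConv_eq (b : ℤ) (N : ℕ) (Q : ℝ) (F : Finset ℤ) (x : ℤ) :
    LoConv χ y b N Q F x =
      ∑ d ∈ heights y Q, stepAvg N (y * d)
        (fun w => ∑ z ∈ F, charSum y b d (w - z) * bumpKer χ ((y * d : ℕ) ^ 2) (w - z)) x -
      if 1 < Q then stepAvg N y (fun w => ∑ z ∈ F, halfBumpKer χ (y ^ 2) (w - z)) x else 0 := by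
  simp only [LoConv, LoK_eq hχ hχ0 hy, Finset.sum_sub_distrib]
  congr 1
  · rw [Finset.sum_comm]
    exact Finset.sum_congr rfl fun d hd => sum_mul_stepAvg F N (y * d)
      (charSum_add_mul (mem_heights.1 hd).2.1 b) (bumpKer χ ((y * d : ℕ) ^ 2)) x
  · split_ifs
    · simpa only [one_mul] using sum_mul_stepAvg F N y (c := fun _ => 1) (fun _ _ => rfl)
        (halfBumpKer χ (y ^ 2)) x
    · exact Finset.sum_const_zero

lemma enorm_LoConv_le (hs : Summable fun u => ‖bumpKer χ (y ^ 2) u‖) (b : ℤ) {N : ℕ}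
    (hyN : y ≤ N) {Q : ℝ} (hN : ∀ d ∈ heights y Q, y * d ≤ N) (F : Finset ℤ) (x : ℤ) :
    ‖LoConv χ y b N Q F x‖ₑ ≤ 2 * (mainMax χ y b Q F x + endpointMax χ y F x) := by
  have hA : (1 : ℝ) ≤ y ^ 2 := one_le_pow₀ (Nat.one_le_cast.2 hy)
  rw [LoConv_eq hχ hχ0 hy, mul_add]
  refine enorm_sub_le.trans (add_le_add ?_ ?_)
  · rw [mainMax, Finset.mul_sum]
    exact (enorm_sum_le _ _).trans (Finset.sum_le_sum fun d hd =>
      enorm_stepAvg_le (Nat.mul_pos hy (mem_heights.1 hd).2.1) (hN d hd)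
        (enorm_sum_sub_le_tsum F fun u => charSum y b d u * bumpKer χ ((y * d : ℕ) ^ 2) u) x)
  · split_ifs
    · refine enorm_stepAvg_le hy hyN (fun w => ?_) x
      rw [← (hasSum_bumpKer_mul_halfProj hχ hχ0 hA hs F w).tsum_eq]
      exact enorm_tsum_le_tsum_enorm.trans_eq (tsum_congr fun u => enorm_mul _ _)
    · simp

end PointwiseBound

section WeightedSums

lemma tsum_mul_rpow_le {ι : Type*} (a g : ι → ℝ≥0∞) {r : ℝ} (hr : 1 ≤ r) :
    (∑' i, a i * g i) ^ r ≤ (∑' i, a i) ^ (r - 1) * ∑' i, a i * g i ^ r := by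
  have hr0 : 0 < r := by linarith
  have h_exp : 0 ≤ 1 - r⁻¹ := sub_nonneg.2 (inv_le_one_of_one_le₀ hr)
  have h_holder : ∑' i, a i * g i ≤
      (∑' i, a i) ^ (1 - r⁻¹) * (∑' i, a i * g i ^ r) ^ r⁻¹ := by
    rw [ENNReal.tsum_eq_iSup_sum]
    refine iSup_le fun s => (ENNReal.inner_le_weight_mul_Lp_of_nonneg s hr a g).trans ?_
    gcongr <;> exact ENNReal.sum_le_tsum s
  calc (∑' i, a i * g i) ^ r
      ≤ ((∑' i, a i) ^ (1 - r⁻¹) * (∑' i, a i * g i ^ r) ^ r⁻¹) ^ r :=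
        ENNReal.rpow_le_rpow h_holder hr0.le
    _ = (∑' i, a i) ^ (r - 1) * ∑' i, a i * g i ^ r := by
        rw [ENNReal.mul_rpow_of_nonneg _ _ hr0.le, ← ENNReal.rpow_mul, ← ENNReal.rpow_mul,
          inv_mul_cancel₀ hr0.ne', ENNReal.rpow_one, sub_mul, inv_mul_cancel₀ hr0.ne', one_mul]

lemma tsum_tsum_mul_rpow_le {ι κ : Type*} (a : ι → ℝ≥0∞) (G : ι → κ → ℝ≥0∞) {r : ℝ} (hr : 1 ≤ r)
    {B : ℝ≥0∞} (hB : ∀ i, ∑' x, G i x ^ r ≤ B) :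
    ∑' x, (∑' i, a i * G i x) ^ r ≤ (∑' i, a i) ^ r * B :=
  calc ∑' x, (∑' i, a i * G i x) ^ r
      ≤ ∑' x, (∑' i, a i) ^ (r - 1) * ∑' i, a i * G i x ^ r :=
        ENNReal.tsum_le_tsum fun x => tsum_mul_rpow_le a (fun i => G i x) hr
    _ = (∑' i, a i) ^ (r - 1) * ∑' i, a i * ∑' x, G i x ^ r := by
        rw [ENNReal.tsum_mul_left, ENNReal.tsum_comm]
        simp only [ENNReal.tsum_mul_left]
    _ ≤ (∑' i, a i) ^ (r - 1) * ∑' i, a i * B :=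
        mul_le_mul_right (ENNReal.tsum_le_tsum fun i => mul_le_mul_right (hB i) _) _
    _ = (∑' i, a i) ^ (r - 1 + 1) * B := by
        rw [ENNReal.tsum_mul_right, ← mul_assoc,
          ENNReal.rpow_add_of_nonneg _ _ (by linarith) zero_le_one, ENNReal.rpow_one]
    _ = (∑' i, a i) ^ r * B := by rw [sub_add_cancel]

lemma tsum_avgMax_sub_rpow_le {l : ℕ} (hl : 0 < l) {r : ℝ} (hr : 1 < r) (g : ℤ → ℝ≥0∞) (u : ℤ) :
    ∑' x, avgMax l g (x - u) ^ r ≤ ENNReal.ofReal (2 ^ r * r / (r - 1)) * ∑' x, g x ^ r :=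
  ((Equiv.subRight u).tsum_eq fun x => avgMax l g x ^ r).trans_le (tsum_avgMax_rpow_le hl hr g)

lemma tsum_indicator_one_rpow {ι : Type*} (F : Finset ι) {r : ℝ} (hr : 0 < r) :
    ∑' x, (F : Set ι).indicator (1 : ι → ℝ≥0∞) x ^ r = F.card := by
  classical
  rw [tsum_eq_sum (s := F) fun x hx => by simp [hx, hr]]
  simp +contextual

end WeightedSums

section DivisorSums

lemma card_divisors_div_totient_eq {d : ℕ} (hd : Squarefree d) :
    (d.divisors.card / Nat.totient d : ℝ) = ∏ p ∈ d.primeFactors, 2 / ((p : ℝ) - 1) := by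
  have h_card : d.divisors.card = ∏ p ∈ d.primeFactors, 2 := by
    rw [Nat.card_divisors hd.ne_zero]
    refine Finset.prod_congr rfl fun p hp => ?_
    rw [Nat.factorization_eq_one_of_squarefree hd (Nat.prime_of_mem_primeFactors hp)
      (Nat.dvd_of_mem_primeFactors hp)]
  have h_totient : Nat.totient d = ∏ p ∈ d.primeFactors, (p - 1) := by
    have h := Nat.totient_mul_prod_primeFactors d
    rw [Nat.prod_primeFactors_of_squarefree hd, mul_comm] at h
    exact Nat.eq_of_mul_eq_mul_left (Nat.pos_of_ne_zero hd.ne_zero) h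
  rw [h_card, h_totient, Finset.prod_div_distrib]
  push_cast
  congr 1
  refine Finset.prod_congr rfl fun p hp => ?_
  rw [Nat.cast_sub (Nat.prime_of_mem_primeFactors hp).one_le, Nat.cast_one]

lemma card_divisors_div_totient_le {d : ℕ} (hd : Squarefree d) (ε : ℝ) :
    (d.divisors.card / Nat.totient d : ℝ) ≤
      (d : ℝ) ^ ε * ∏ p ∈ d.primeFactors, 4 / (p : ℝ) ^ (1 + ε) := by
  have h_pow : (d : ℝ) ^ ε = ∏ p ∈ d.primeFactors, (p : ℝ) ^ ε := by
    conv_lhs => rw [← Nat.prod_primeFactors_of_squarefree hd]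
    rw [Nat.cast_prod, Real.finsetProd_rpow _ _ fun p _ => Nat.cast_nonneg p]
  rw [card_divisors_div_totient_eq hd, h_pow, ← Finset.prod_mul_distrib]
  have h_two {p : ℕ} (hp : p ∈ d.primeFactors) : (2 : ℝ) ≤ p :=
    Nat.ofNat_le_cast.2 (Nat.prime_of_mem_primeFactors hp).two_le
  refine Finset.prod_le_prod (fun p hp => ?_) fun p hp => ?_
  · exact div_nonneg zero_le_two (by linarith [h_two hp])
  · have hp0 : (0 : ℝ) < p := by linarith [h_two hp]
    have h_ne := (Real.rpow_pos_of_pos hp0 ε).ne'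
    calc 2 / ((p : ℝ) - 1) ≤ 4 / p := by
          rw [div_le_div_iff₀ (by linarith [h_two hp]) hp0]
          linarith [h_two hp]
      _ = (p : ℝ) ^ ε * (4 / (p : ℝ) ^ (1 + ε)) := by
          rw [Real.rpow_add hp0, Real.rpow_one]
          field_simp

lemma sum_squarefree_prod_primeFactors_le_exp {f : ℕ → ℝ} (hf0 : ∀ n, 0 ≤ f n)
    (hf : Summable f) {s : Finset ℕ} (hs : ∀ d ∈ s, Squarefree d) :
    ∑ d ∈ s, ∏ p ∈ d.primeFactors, f p ≤ Real.exp (∑' n, f n) := by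
  have h_inj : Set.InjOn Nat.primeFactors s := fun a ha b hb h => by
    rw [← Nat.prod_primeFactors_of_squarefree (hs a ha), h,
      Nat.prod_primeFactors_of_squarefree (hs b hb)]
  calc ∑ d ∈ s, ∏ p ∈ d.primeFactors, f p
      = ∑ t ∈ s.image Nat.primeFactors, ∏ p ∈ t, f p :=
        (Finset.sum_image (f := fun t => ∏ p ∈ t, f p) h_inj).symm
    _ ≤ ∑ t ∈ (s.biUnion Nat.primeFactors).powerset, ∏ p ∈ t, f p := by
        refine Finset.sum_le_sum_of_subset_of_nonneg (Finset.image_subset_iff.2 fun d hd => ?_)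
          fun t _ _ => Finset.prod_nonneg fun p _ => hf0 p
        exact Finset.mem_powerset.2 (Finset.subset_biUnion_of_mem Nat.primeFactors hd)
    _ = ∏ p ∈ s.biUnion Nat.primeFactors, (1 + f p) := (Finset.prod_one_add _).symm
    _ ≤ ∏ p ∈ s.biUnion Nat.primeFactors, Real.exp (f p) :=
        Finset.prod_le_prod (fun p _ => by linarith [hf0 p]) fun p _ => by
          linarith [Real.add_one_le_exp (f p)]
    _ ≤ Real.exp (∑' n, f n) := by
        rw [← Real.exp_sum]
        exact Real.exp_le_exp.2 (hf.sum_le_tsum _ fun p _ => hf0 p)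

lemma exists_sum_card_divisors_div_totient_le {ε : ℝ} (hε : 0 < ε) :
    ∃ C : ℝ, 0 < C ∧ ∀ Q : ℝ, 0 ≤ Q → ∀ s : Finset ℕ, (∀ d ∈ s, Squarefree d ∧ (d : ℝ) ≤ Q) →
      ∑ d ∈ s, (d.divisors.card / Nat.totient d : ℝ) ≤ C * Q ^ ε := by
  have hf : Summable fun n : ℕ => 4 / (n : ℝ) ^ (1 + ε) := by
    simpa only [mul_one_div] using
      (Real.summable_one_div_nat_rpow.2 (lt_add_of_pos_right 1 hε)).mul_left 4
  refine ⟨Real.exp (∑' n : ℕ, 4 / (n : ℝ) ^ (1 + ε)), Real.exp_pos _, fun Q hQ s hs => ?_⟩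
  calc ∑ d ∈ s, (d.divisors.card / Nat.totient d : ℝ)
      ≤ ∑ d ∈ s, Q ^ ε * ∏ p ∈ d.primeFactors, 4 / (p : ℝ) ^ (1 + ε) := by
        refine Finset.sum_le_sum fun d hd => (card_divisors_div_totient_le (hs d hd).1 ε).trans ?_
        gcongr
        exact (hs d hd).2
    _ ≤ Q ^ ε * Real.exp (∑' n : ℕ, 4 / (n : ℝ) ^ (1 + ε)) := by
        rw [← Finset.mul_sum]
        refine mul_le_mul_of_nonneg_left (sum_squarefree_prod_primeFactors_le_exp
          (fun n => by positivity) hf fun d hd => (hs d hd).1) (by positivity)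
    _ = _ := mul_comm _ _

end DivisorSums

section LpBounds

lemma rpow_tsum_const_mul_add_le (c : ℝ≥0∞) (f g : ℤ → ℝ≥0∞) {r : ℝ} (hr : 1 ≤ r) :
    (∑' x, (c * (f x + g x)) ^ r) ^ (1 / r) ≤
      c * ((∑' x, f x ^ r) ^ (1 / r) + (∑' x, g x ^ r) ^ (1 / r)) := by
  have hr0 : 0 < r := by linarith
  simp only [ENNReal.mul_rpow_of_nonneg _ _ hr0.le, ENNReal.tsum_mul_left]
  rw [ENNReal.mul_rpow_of_nonneg _ _ (by positivity), one_div, ENNReal.rpow_rpow_inv hr0.ne']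
  gcongr
  simpa only [lintegral_count, one_div, Pi.add_apply] using ENNReal.lintegral_Lp_add_le
    (μ := Measure.count) (measurable_of_countable f).aemeasurable
    (measurable_of_countable g).aemeasurable hr

lemma rpow_one_div_le_ofReal {S : ℝ≥0∞} {a c r : ℝ} {n : ℕ} (ha : 0 ≤ a) (hc : 0 ≤ c)
    (hr : 0 < r) (h : S ≤ ENNReal.ofReal a ^ r * (ENNReal.ofReal c * n)) :
    S ^ (1 / r) ≤ ENNReal.ofReal (a * c ^ (1 / r) * (n : ℝ) ^ (1 / r)) := by
  have hr' : 0 ≤ 1 / r := by positivity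
  refine (ENNReal.rpow_le_rpow h hr').trans_eq ?_
  rw [ENNReal.mul_rpow_of_nonneg _ _ hr', ENNReal.mul_rpow_of_nonneg _ _ hr', one_div,
    ENNReal.rpow_rpow_inv hr.ne', ← ENNReal.ofReal_natCast,
    ENNReal.ofReal_rpow_of_nonneg hc (by positivity),
    ENNReal.ofReal_rpow_of_nonneg (by positivity) (by positivity), ← mul_assoc,
    ← ENNReal.ofReal_mul ha, ← ENNReal.ofReal_mul (by positivity)]

variable {χ : ℝ → ℝ} (hχ : ContDiff ℝ 2 χ)
  (hχ0 : ∀ x : ℝ, x ∉ Set.Icc (-(1 / 4) : ℝ) (1 / 4) → χ x = 0)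
include hχ hχ0

lemma exists_tsum_enorm_bumpKer_le :
    ∃ C, 0 < C ∧ ∀ A : ℝ, 1 ≤ A → ∑' u, ‖bumpKer χ A u‖ₑ ≤ ENNReal.ofReal C := by
  obtain ⟨C, hC, h_decay⟩ := exists_norm_bumpKer_le hχ0 hχ
  refine ⟨C * 4, by positivity, fun A hA => ?_⟩
  have h_weight := tsum_decayWeight_add_mul_le one_pos (by simpa using hA) 0
  simp only [Nat.cast_one, one_mul, zero_add, div_one] at h_weight
  calc ∑' u, ‖bumpKer χ A u‖ₑ
      ≤ ∑' u : ℤ, ENNReal.ofReal C * ENNReal.ofReal (decayWeight A u) := by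
        refine ENNReal.tsum_le_tsum fun u => ?_
        rw [← ofReal_norm, ← ENNReal.ofReal_mul hC.le]
        exact ENNReal.ofReal_le_ofReal (h_decay A hA u)
    _ ≤ ENNReal.ofReal C * ENNReal.ofReal 4 := by
        rw [ENNReal.tsum_mul_left]
        exact mul_le_mul_right h_weight _
    _ = ENNReal.ofReal (C * 4) := (ENNReal.ofReal_mul hC.le).symm

lemma summable_norm_bumpKer {A : ℝ} (hA : 1 ≤ A) : Summable fun u => ‖bumpKer χ A u‖ := by
  obtain ⟨C, -, hC⟩ := exists_tsum_enorm_bumpKer_le hχ hχ0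
  simpa using ENNReal.summable_toReal ((hC A hA).trans_lt ENNReal.ofReal_lt_top).ne

lemma exists_tsum_enorm_charSum_mul_bumpKer_le :
    ∃ C, 0 < C ∧ ∀ (y d : ℕ) (b : ℤ), 0 < y → 0 < d → y.Coprime d → IsCoprime b y →
      ∑' u, ‖charSum y b d u * bumpKer χ ((y * d : ℕ) ^ 2) u‖ₑ ≤
        ENNReal.ofReal (if Squarefree d then C * (d.divisors.card / Nat.totient d) else 0) := by
  obtain ⟨C, hC, h_decay⟩ := exists_norm_bumpKer_le hχ0 hχ
  refine ⟨C * 4, by positivity, fun y d b hy hd hyd hb => ?_⟩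
  have hA : (1 : ℝ) ≤ (y * d : ℕ) ^ 2 := one_le_pow₀ (Nat.one_le_cast.2 (Nat.mul_pos hy hd))
  calc ∑' u, ‖charSum y b d u * bumpKer χ ((y * d : ℕ) ^ 2) u‖ₑ
      ≤ ∑' u : ℤ, ENNReal.ofReal C *
          ENNReal.ofReal (‖charSum y b d u‖ * decayWeight ((y * d : ℕ) ^ 2) u) := by
        refine ENNReal.tsum_le_tsum fun u => ?_
        rw [← ENNReal.ofReal_mul hC.le, ← ofReal_norm, norm_mul, mul_left_comm]
        exact ENNReal.ofReal_le_ofReal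
          (mul_le_mul_of_nonneg_left (h_decay _ hA u) (norm_nonneg _))
    _ ≤ ENNReal.ofReal C *
          ENNReal.ofReal (if Squarefree d then 4 * (d.divisors.card / Nat.totient d) else 0) := by
        rw [ENNReal.tsum_mul_left]
        exact mul_le_mul_right (tsum_norm_charSum_mul_decayWeight_le hy hd hyd hb) _
    _ = _ := by rw [← ENNReal.ofReal_mul hC.le, mul_ite, mul_zero, mul_assoc]

lemma exists_sum_heights_tsum_enorm_le {ε : ℝ} (hε : 0 < ε) :
    ∃ C, 0 < C ∧ ∀ (y : ℕ) (b : ℤ) (Q : ℝ), 0 < y → IsCoprime b y → 0 ≤ Q →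
      ∑ d ∈ heights y Q, ∑' u, ‖charSum y b d u * bumpKer χ ((y * d : ℕ) ^ 2) u‖ₑ ≤
        ENNReal.ofReal (C * Q ^ ε) := by
  obtain ⟨C, hC, h_kernel⟩ := exists_tsum_enorm_charSum_mul_bumpKer_le hχ hχ0
  obtain ⟨D, hD, h_divisors⟩ := exists_sum_card_divisors_div_totient_le hε
  refine ⟨C * D, by positivity, fun y b Q hy hb hQ => ?_⟩
  calc ∑ d ∈ heights y Q, ∑' u, ‖charSum y b d u * bumpKer χ ((y * d : ℕ) ^ 2) u‖ₑ
      ≤ ∑ d ∈ heights y Q,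
          ENNReal.ofReal (if Squarefree d then C * (d.divisors.card / Nat.totient d) else 0) :=
        Finset.sum_le_sum fun d hd =>
          h_kernel y d b hy (mem_heights.1 hd).2.1 (mem_heights.1 hd).2.2 hb
    _ = ENNReal.ofReal (C * ∑ d ∈ heights y Q with Squarefree d,
          (d.divisors.card / Nat.totient d : ℝ)) := by
        rw [← ENNReal.ofReal_sum_of_nonneg fun d _ => by positivity, ← Finset.sum_filter,
          Finset.mul_sum]
    _ ≤ ENNReal.ofReal (C * (D * Q ^ ε)) := by
        gcongr
        refine h_divisors Q hQ _ fun d hd => ?_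
        rw [Finset.mem_filter, mem_heights] at hd
        exact ⟨hd.2, hd.1.1.le⟩
    _ = _ := by rw [mul_assoc]

lemma exists_rpow_tsum_mainMax_le {ε r : ℝ} (hε : 0 < ε) (hr : 1 < r) :
    ∃ C, 0 < C ∧ ∀ (y : ℕ) (b : ℤ) (Q : ℝ) (F : Finset ℤ), 0 < y → IsCoprime b y → 0 ≤ Q →
      (∑' x, mainMax χ y b Q F x ^ r) ^ (1 / r) ≤
        ENNReal.ofReal (C * Q ^ ε * (F.card : ℝ) ^ (1 / r)) := by
  obtain ⟨C, hC, h_kernel⟩ := exists_sum_heights_tsum_enorm_le hχ hχ0 hε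
  have : 0 < r - 1 := by linarith
  have hM : 0 < 2 ^ r * r / (r - 1) := by positivity
  refine ⟨C * (2 ^ r * r / (r - 1)) ^ (1 / r), by positivity, fun y b Q F hy hb hQ => ?_⟩
  rw [mul_right_comm C]
  refine rpow_one_div_le_ofReal (by positivity) hM.le (by linarith) ?_
  let a (i : heights y Q × ℤ) : ℝ≥0∞ :=
    ‖charSum y b i.1 i.2 * bumpKer χ ((y * i.1 : ℕ) ^ 2) i.2‖ₑ
  let G (i : heights y Q × ℤ) (x : ℤ) : ℝ≥0∞ :=
    avgMax (y * i.1) ((F : Set ℤ).indicator 1) (x - i.2)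
  have h_main (x : ℤ) : mainMax χ y b Q F x = ∑' i, a i * G i x := by
    rw [mainMax, ENNReal.tsum_prod', tsum_fintype, ← Finset.sum_coe_sort]
  have h_total : ∑' i, a i ≤ ENNReal.ofReal (C * Q ^ ε) := by
    rw [ENNReal.tsum_prod', tsum_fintype]
    exact (Finset.sum_coe_sort (heights y Q) fun d =>
      ∑' u, ‖charSum y b d u * bumpKer χ ((y * d : ℕ) ^ 2) u‖ₑ).trans_le (h_kernel y b Q hy hb hQ)
  simp only [h_main]
  refine (tsum_tsum_mul_rpow_le a G hr.le fun i => ?_).trans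
    (mul_le_mul_left (ENNReal.rpow_le_rpow h_total (by linarith)) _)
  rw [← tsum_indicator_one_rpow F (zero_lt_one.trans hr)]
  exact tsum_avgMax_sub_rpow_le (Nat.mul_pos hy (mem_heights.1 i.1.2).2.1) hr _ _

lemma exists_rpow_tsum_endpointMax_le {r : ℝ} (hr : 1 < r) (hr2 : r ≤ 2) :
    ∃ C, 0 < C ∧ ∀ (y : ℕ) (F : Finset ℤ), 0 < y →
      (∑' x, endpointMax χ y F x ^ r) ^ (1 / r) ≤
        ENNReal.ofReal (C * (F.card : ℝ) ^ (1 / r)) := by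
  obtain ⟨C, hC, h_kernel⟩ := exists_tsum_enorm_bumpKer_le hχ hχ0
  have : 0 < r - 1 := by linarith
  have hM : 0 < 2 ^ r * r / (r - 1) * (5 * r / (r - 1) + 1) := by positivity
  refine ⟨C * (2 ^ r * r / (r - 1) * (5 * r / (r - 1) + 1)) ^ (1 / r), by positivity,
    fun y F hy => rpow_one_div_le_ofReal hC.le hM.le (by linarith) ?_⟩
  rw [ENNReal.ofReal_mul (by positivity), mul_assoc (ENNReal.ofReal _) (ENNReal.ofReal _)]
  have hA : (1 : ℝ) ≤ y ^ 2 := one_le_pow₀ (Nat.one_le_cast.2 hy)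
  refine (tsum_tsum_mul_rpow_le _ _ hr.le fun u => ?_).trans
    (mul_le_mul_left (ENNReal.rpow_le_rpow (h_kernel _ hA) (by linarith)) _)
  exact (tsum_avgMax_sub_rpow_le hy hr _ u).trans
    (mul_le_mul_right (tsum_enorm_halfProj_rpow_le hr hr2 F) _)

end LpBounds

lemma mul_le_of_lt_log {y N : ℕ} (hN : 4 * y ^ 2 < N) {Q : ℝ} (hQ : Q < Real.log N) :
    y * Q ≤ N := by
  have hN0 : (0 : ℝ) ≤ N := Nat.cast_nonneg N
  have h_log : Real.log N ≤ 2 * √N := by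
    have h := Real.log_le_rpow_div hN0 (ε := 1 / 2) (by norm_num)
    rw [← Real.sqrt_eq_rpow] at h
    linarith
  have h_sqrt : 2 * (y : ℝ) ≤ √N := by
    refine Real.le_sqrt_of_sq_le ?_
    have : (4 * y ^ 2 : ℝ) < N := by exact_mod_cast hN
    linarith
  calc (y : ℝ) * Q ≤ y * (2 * √N) := by gcongr; linarith
    _ = 2 * y * √N := by ring
    _ ≤ √N * √N := by gcongr
    _ = N := Real.mul_self_sqrt hN0

theorem low_term_maximal_general {χ : ℝ → ℝ} (hχ : ContDiff ℝ 2 χ)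
    (hχ0 : ∀ x : ℝ, x ∉ Set.Icc (-(1 / 4) : ℝ) (1 / 4) → χ x = 0) {ε r : ℝ} (hε : 0 < ε)
    (hr : 1 < r) (hr2 : r ≤ 2) :
    ∃ C : ℝ, 0 < C ∧ ∀ (y : ℕ) (b : ℤ) (Q : ℝ) (F : Finset ℤ), 1 ≤ y → IsCoprime b y → 1 ≤ Q →
      (∑' x : ℤ, (⨆ (N : ℕ) (_ : y * Q ≤ N), ‖LoConv χ y b N Q F x‖ₑ) ^ r) ^ (1 / r) ≤
        ENNReal.ofReal (C * Q ^ ε * (F.card : ℝ) ^ (1 / r)) := by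
  obtain ⟨C₁, hC₁, h_main⟩ := exists_rpow_tsum_mainMax_le hχ hχ0 hε hr
  obtain ⟨C₂, hC₂, h_endpoint⟩ := exists_rpow_tsum_endpointMax_le hχ hχ0 hr hr2
  refine ⟨2 * (C₁ + C₂), by positivity, fun y b Q F hy hb hQ => ?_⟩
  have hs := summable_norm_bumpKer hχ hχ0 (one_le_pow₀ (Nat.one_le_cast.2 hy) : (1 : ℝ) ≤ y ^ 2)
  have h_pointwise (x : ℤ) : ⨆ (N : ℕ) (_ : y * Q ≤ N), ‖LoConv χ y b N Q F x‖ₑ ≤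
      2 * (mainMax χ y b Q F x + endpointMax χ y F x) := by
    refine iSup₂_le fun N hN => enorm_LoConv_le hχ.continuous hχ0 hy hs b ?_ (fun d hd => ?_) F x
    · exact_mod_cast (le_mul_of_one_le_right y.cast_nonneg hQ).trans hN
    · exact_mod_cast (mul_le_mul_of_nonneg_left (mem_heights.1 hd).1.le y.cast_nonneg).trans hN
  calc (∑' x : ℤ, (⨆ (N : ℕ) (_ : y * Q ≤ N), ‖LoConv χ y b N Q F x‖ₑ) ^ r) ^ (1 / r)
      ≤ (∑' x, (2 * (mainMax χ y b Q F x + endpointMax χ y F x)) ^ r) ^ (1 / r) := by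
        gcongr with x
        exact h_pointwise x
    _ ≤ 2 * (ENNReal.ofReal (C₁ * Q ^ ε * (F.card : ℝ) ^ (1 / r)) +
          ENNReal.ofReal (C₂ * (F.card : ℝ) ^ (1 / r))) :=
        (rpow_tsum_const_mul_add_le 2 _ _ hr.le).trans
          (mul_le_mul_right (add_le_add (h_main y b Q F hy hb (by linarith)) (h_endpoint y F hy)) _)
    _ ≤ ENNReal.ofReal (2 * (C₁ + C₂) * Q ^ ε * (F.card : ℝ) ^ (1 / r)) := by
        rw [← ENNReal.ofReal_add (by positivity) (by positivity), ← ENNReal.ofReal_ofNat,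
          ← ENNReal.ofReal_mul (by positivity)]
        refine ENNReal.ofReal_le_ofReal ?_
        have hQε : C₂ ≤ C₂ * Q ^ ε := le_mul_of_one_le_right hC₂.le (Real.one_le_rpow hQ hε.le)
        have hF : C₂ * (F.card : ℝ) ^ (1 / r) ≤ C₂ * Q ^ ε * (F.card : ℝ) ^ (1 / r) := by gcongr
        linarith

theorem low_term_maximal (χ : ℝ → ℝ) (hχs : ContDiff ℝ (⊤ : ℕ∞) χ)
    (hχr : ∀ x : ℝ, χ x ∈ Set.Icc (0 : ℝ) 1)
    (hχ1 : ∀ x ∈ Set.Icc (-(1/16) : ℝ) (1/16), χ x = 1)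
    (hχ0 : ∀ x : ℝ, x ∉ Set.Icc (-(1/4) : ℝ) (1/4) → χ x = 0) :
    ∀ ε : ℝ, 0 < ε → ∀ r : ℝ, 1 < r → r < 2 →
      ∃ C C' : ℝ, 0 < C ∧ 0 < C' ∧
        ∀ y : ℕ, 1 ≤ y →
          ∃ N0 : ℕ,
            ∀ b : ℤ, Int.gcd b y = 1 →
              ∀ Q : ℝ, 1 ≤ Q →
                ∀ F : Finset ℤ,
                  (∑' x : ℤ,
                      (⨆ (n : ℕ)
                          (_ : N0 < 2 ^ n ∧
                            Q < Real.log ((2 : ℝ) ^ n) ^ (C' * (r / (r - 1)))),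
                        (‖LoConv χ y b (2 ^ n) Q F x‖₊ : ℝ≥0∞)) ^ r) ^ (1 / r) ≤
                    ENNReal.ofReal (C * Q ^ ε * (F.card : ℝ) ^ (1 / r)) := by
  intro ε hε r hr hr2
  obtain ⟨C, hC, h_bound⟩ := low_term_maximal_general
    (contDiff_infty.1 hχs 2) hχ0 hε hr hr2.le
  have hr1 : 0 < r - 1 := by linarith
  refine ⟨C, (r - 1) / r, hC, by positivity, fun y hy => ⟨4 * y ^ 2, fun b hb Q hQ F =>
    le_trans ?_ (h_bound y b Q F hy (Int.isCoprime_iff_gcd_eq_one.2 hb) hQ)⟩⟩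
  rw [div_mul_div_cancel₀ (by positivity), div_self hr1.ne']
  refine ENNReal.rpow_le_rpow (ENNReal.tsum_le_tsum fun x => ENNReal.rpow_le_rpow
    (iSup₂_le fun n hn => ?_) (by positivity)) (by positivity)
  rw [Real.rpow_one] at hn
  exact le_iSup₂_of_le (f := fun (N : ℕ) (_ : y * Q ≤ N) => ‖LoConv χ y b N Q F x‖ₑ) (2 ^ n)
    (mul_le_of_lt_log hn.1 (by exact_mod_cast hn.2)) le_rfl

end
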